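/- arXiv:2310.05328 — 5 statements merged into one kernel-verified Lean document; each statement's English description precedes it below -/
import Mathlib

section
/- There exists an absolute constant C > 0 such that for every n ≥ 1, all real numbers y_1, …, y_n, and all integers 1 ≤ k < ℓ ≤ n, one has |s_ℓ(y)|^(1/ℓ) ≤ C · max( (ℓ/k)^(1/2) · |s_k(y)|^(1/k), (ℓ/(k+1))^(1/2) · |s_{k+1}(y)|^(1/(k+1)) ). -/
open Finset Real

/-- The non-normalized elementary symmetric function `S_m(y)`. -/
noncomputable def esymmS (n m : ℕ) (y : Fin n → ℝ) : ℝ :=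
  ∑ A ∈ powersetCard m (univ : Finset (Fin n)), ∏ i ∈ A, y i

/-- The elementary symmetric mean `s_m(y) = S_m(y) / binom(n,m)`. -/
noncomputable def smean (n m : ℕ) (y : Fin n → ℝ) : ℝ :=
  esymmS n m y / (n.choose m)

/-!
For a real-rooted polynomial `p`, the size `F(r) = |p(ir)|` on the imaginary axis is a product of
factors `√(x² + r²)` over the roots, so it is governed by `N(r) = ∑ r² / (x² + r²)`: on the one hand
`F(tr) ≤ exp ((t² - 1) N(r) / 2) F(r)`, on the other hand `N(r) F(r) ≤ r |p'(ir)|`. Playing these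
against each other with the best `t` shows that a lower bound `A r ^ (m + 1) ≤ F(r)` for all `r > 0`
passes to the derivative as `((m + 1) / e) A r ^ m ≤ |p'(ir)|`.

Differentiate `k - 1` times. Lower bounds on `F` of orders `r ^ k` and `r ^ (k + 1)` become bounds
of orders `r` and `r²` for a polynomial `c₀ + c₁ X + c₂ X² + ⋯` satisfying
`F(r) ≤ |c₀| exp ((c₁² - 2 c₀ c₂) r² / (2 c₀²))`, and the choice `r² = c₀² / (c₁² - 2 c₀ c₂)` forces
`c₁` or `c₂` to be large.

Passing to derivatives of `∏ (X - yᵢ)` reduces the inequality to `n = ℓ`, where `s_ℓ` is the product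
of the variables. Then weighted AM-GM on each factor of `∏ |1 + i r yᵢ|` gives the lower bound
`(√(ℓ / j) |s_ℓ| ^ (1 / ℓ) r) ^ j` for every `1 ≤ j ≤ ℓ`, to be used with `j = k` and `j = k + 1`.
-/

section ImagAxisNorm

open Polynomial

/-- The modulus `|p(ir)|` of a real polynomial at a point of the imaginary axis, bundled
as a multiplicative map in `p`. -/
noncomputable def imagAxisNorm (r : ℝ) : ℝ[X] →*₀ ℝ :=
  normHom.comp (aeval (r * Complex.I : ℂ) : ℝ[X] →ₐ[ℝ] ℂ).toRingHom.toMonoidWithZeroHom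

theorem imagAxisNorm_apply (r : ℝ) (p : ℝ[X]) :
    imagAxisNorm r p = ‖aeval (r * Complex.I : ℂ) p‖ := rfl

theorem imagAxisNorm_nonneg (r : ℝ) (p : ℝ[X]) : 0 ≤ imagAxisNorm r p := by
  rw [imagAxisNorm_apply]; exact norm_nonneg _

theorem imagAxisNorm_C (r a : ℝ) : imagAxisNorm r (C a) = |a| := by
  simp [imagAxisNorm_apply]

theorem imagAxisNorm_X (r : ℝ) : imagAxisNorm r X = |r| := by
  simp [imagAxisNorm_apply]

theorem imagAxisNorm_C_add_C_mul_X (r b a : ℝ) :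
    imagAxisNorm r (C b + C a * X) = √(b ^ 2 + (a * r) ^ 2) := by
  rw [imagAxisNorm_apply, ← Complex.norm_add_mul_I]
  simp [mul_assoc]

theorem imagAxisNorm_eq_of_splits {p : ℝ[X]} (hp : p.Splits) (r : ℝ) :
    imagAxisNorm r p = |p.leadingCoeff| * (p.roots.map fun x => √(x ^ 2 + r ^ 2)).prod := by
  have factor (x : ℝ) : imagAxisNorm r (X - C x) = √(x ^ 2 + r ^ 2) := by
    simpa [neg_add_eq_sub] using imagAxisNorm_C_add_C_mul_X r (-x) 1
  conv_lhs => rw [hp.eq_prod_roots]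
  simp [map_multiset_prod, Multiset.map_map, factor, imagAxisNorm_C]

/-- The sum of `r² / (x² + r²)` over the roots `x` of `p`. When `p` is real-rooted this is the
logarithmic derivative `r ∂ᵣ log |p(ir)|`, a smoothed count of the roots in `[-r, r]`. -/
noncomputable def imagAxisLogDeriv (p : ℝ[X]) (r : ℝ) : ℝ :=
  (p.roots.map fun x => r ^ 2 / (x ^ 2 + r ^ 2)).sum

theorem imagAxisLogDeriv_nonneg (p : ℝ[X]) (r : ℝ) : 0 ≤ imagAxisLogDeriv p r :=
  Multiset.sum_nonneg <| by
    simp only [Multiset.mem_map]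
    rintro _ ⟨x, -, rfl⟩
    positivity

theorem sqrt_sq_add_mul_sq_le (x t : ℝ) {r : ℝ} (hr : r ≠ 0) :
    √(x ^ 2 + (t * r) ^ 2) ≤
      exp ((t ^ 2 - 1) / 2 * (r ^ 2 / (x ^ 2 + r ^ 2))) * √(x ^ 2 + r ^ 2) := by
  have hpos : 0 < x ^ 2 + r ^ 2 := by positivity
  rw [sqrt_le_left (by positivity), mul_pow (exp _), sq_sqrt hpos.le, ← exp_nat_mul]
  calc x ^ 2 + (t * r) ^ 2
      = ((t ^ 2 - 1) * (r ^ 2 / (x ^ 2 + r ^ 2)) + 1) * (x ^ 2 + r ^ 2) := by field_simp; ring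
    _ ≤ exp ((t ^ 2 - 1) * (r ^ 2 / (x ^ 2 + r ^ 2))) * (x ^ 2 + r ^ 2) := by
        gcongr; exact add_one_le_exp _
    _ = _ := by congr 2; push_cast; ring

theorem imagAxisNorm_mul_le {p : ℝ[X]} (hp : p.Splits) (t : ℝ) {r : ℝ} (hr : r ≠ 0) :
    imagAxisNorm (t * r) p ≤
      exp ((t ^ 2 - 1) / 2 * imagAxisLogDeriv p r) * imagAxisNorm r p := by
  have hexp : exp ((t ^ 2 - 1) / 2 * imagAxisLogDeriv p r) =
      (p.roots.map fun x => exp ((t ^ 2 - 1) / 2 * (r ^ 2 / (x ^ 2 + r ^ 2)))).prod := by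
    rw [imagAxisLogDeriv, ← Multiset.sum_map_mul_left, exp_multiset_sum, Multiset.map_map]
    rfl
  rw [imagAxisNorm_eq_of_splits hp, imagAxisNorm_eq_of_splits hp, hexp, mul_left_comm,
    ← Multiset.prod_map_mul]
  gcongr
  exact Multiset.prod_map_le_prod_map₀ _ _ (fun _ _ => sqrt_nonneg _)
    fun x _ => sqrt_sq_add_mul_sq_le x t hr

theorem imagAxisLogDeriv_mul_le {p : ℝ[X]} (hp : p.Splits) (r : ℝ) :
    imagAxisLogDeriv p r * imagAxisNorm r p ≤ |r| * imagAxisNorm r (derivative p) := by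
  set z : ℂ := r * Complex.I with hz
  set q := p.map (algebraMap ℝ ℂ) with hq
  have norm_eq (f : ℝ[X]) : imagAxisNorm r f = ‖(f.map (algebraMap ℝ ℂ)).eval z‖ := by
    rw [imagAxisNorm_apply, eval_map_algebraMap]
  rcases eq_or_ne (q.eval z) 0 with h0 | h0
  · rw [norm_eq p, h0, norm_zero, mul_zero]
    exact mul_nonneg (abs_nonneg r) (imagAxisNorm_nonneg r _)
  have im_term (x : ℝ) : (1 / (z - x)).im * r = -(r ^ 2 / (x ^ 2 + r ^ 2)) := by
    simp only [hz, one_div, Complex.inv_im, Complex.sub_im, Complex.mul_im, Complex.ofReal_re,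
      Complex.I_im, mul_one, Complex.ofReal_im, Complex.I_re, mul_zero, add_zero, sub_zero,
      Complex.normSq_apply, Complex.sub_re, Complex.mul_re, sub_self, zero_sub, mul_neg, neg_mul,
      neg_neg]
    ring
  have im_eq : (q.derivative.eval z / q.eval z).im * r = -imagAxisLogDeriv p r := by
    rw [(hp.map _).eval_derivative_div_eval_of_ne_zero h0, hp.roots_map, Multiset.map_map,
      ← Complex.coe_imAddGroupHom, map_multiset_sum, Multiset.map_map, ← Multiset.sum_map_mul_right,
      imagAxisLogDeriv, ← Multiset.sum_map_neg']
    simpa using congrArg Multiset.sum (Multiset.map_congr rfl fun x _ => im_term x)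
  calc imagAxisLogDeriv p r * imagAxisNorm r p
      = |(q.derivative.eval z / q.eval z).im| * |r| * ‖q.eval z‖ := by
        rw [← abs_mul, im_eq, abs_neg, abs_of_nonneg (imagAxisLogDeriv_nonneg p r), norm_eq]
    _ ≤ ‖q.derivative.eval z / q.eval z‖ * |r| * ‖q.eval z‖ := by
        gcongr; exact Complex.abs_im_le_norm _
    _ = |r| * imagAxisNorm r (derivative p) := by
        rw [norm_eq, ← derivative_map, norm_div]
        field_simp
        rw [← hq, mul_comm]

theorem nonpos_of_forall_mul_pow_le {K : Type*} [Field K] [LinearOrder K]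
    [IsStrictOrderedRing K] {A M : K} {m : ℕ} (hm : m ≠ 0)
    (h : ∀ r > 0, A * r ^ m ≤ M) : A ≤ 0 := by
  by_contra! hA
  have htendsto := (Filter.tendsto_pow_atTop hm).const_mul_atTop hA
  obtain ⟨r, hr, hr'⟩ :=
    ((htendsto.eventually_gt_atTop M).and (Filter.eventually_gt_atTop 0)).exists
  exact (h r hr').not_gt hr

theorem sq_mul_exp_le {κ t : ℝ} (hκ : 2 ≤ κ) (ht : 0 < t) :
    t ^ 2 * exp ((t ^ 2 - 1) / 2 * (κ / t ^ 2)) ≤ exp 1 * t ^ κ := by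
  have hlog : 1 - (t ^ 2)⁻¹ ≤ 2 * log t := by
    simpa using one_sub_inv_le_log_of_pos (pow_pos ht 2)
  have hinv : 0 < (t ^ 2)⁻¹ := by positivity
  have hexp : (t ^ 2 - 1) / 2 * (κ / t ^ 2) = κ / 2 * (1 - (t ^ 2)⁻¹) := by field_simp
  rw [hexp, ← exp_log (pow_pos ht 2), rpow_def_of_pos ht, ← exp_add, ← exp_add,
    exp_le_exp, exp_log (pow_pos ht 2), log_pow]
  push_cast
  nlinarith

theorem mul_sq_le_of_mul_rpow_le {B G κ t : ℝ} (hκ : 2 ≤ κ) (ht : 0 < t) (hG : 0 ≤ G)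
    (h : B * t ^ κ ≤ exp ((t ^ 2 - 1) / 2 * (κ / t ^ 2)) * G) : B * t ^ 2 ≤ exp 1 * G := by
  refine le_of_mul_le_mul_right ?_ (rpow_pos_of_pos ht κ)
  calc B * t ^ 2 * t ^ κ = t ^ 2 * (B * t ^ κ) := by ring
    _ ≤ t ^ 2 * (exp ((t ^ 2 - 1) / 2 * (κ / t ^ 2)) * G) := by gcongr
    _ = t ^ 2 * exp ((t ^ 2 - 1) / 2 * (κ / t ^ 2)) * G := by ring
    _ ≤ exp 1 * t ^ κ * G := by gcongr ?_ * G; exact sq_mul_exp_le hκ ht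
    _ = exp 1 * G * t ^ κ := by ring

theorem splits_derivative {p : ℝ[X]} (hp : p.Splits) : (derivative p).Splits := by
  rw [splits_iff_card_roots] at hp ⊢
  have := card_roots_le_derivative p
  have := (derivative p).card_roots'
  have := natDegree_derivative_le p
  omega

theorem le_imagAxisNorm_derivative {p : ℝ[X]} (hp : p.Splits) {A : ℝ} {m : ℕ} (hm : 1 ≤ m)
    (h : ∀ r > 0, A * r ^ (m + 1) ≤ imagAxisNorm r p) {r : ℝ} (hr : 0 < r) :
    (m + 1) / exp 1 * A * r ^ m ≤ imagAxisNorm r (derivative p) := by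
  set N := imagAxisLogDeriv p r
  set G := imagAxisNorm r p
  have hderiv : N * G ≤ r * imagAxisNorm r (derivative p) := by
    simpa [abs_of_pos hr] using imagAxisLogDeriv_mul_le hp r
  have hscale (t : ℝ) (ht : 0 < t) :
      A * (t * r) ^ (m + 1) ≤ exp ((t ^ 2 - 1) / 2 * N) * G :=
    (h _ (mul_pos ht hr)).trans (imagAxisNorm_mul_le hp t hr.ne')
  rcases (show 0 ≤ N from imagAxisLogDeriv_nonneg p r).eq_or_lt with hN0 | hN0
  · have hA : A * r ^ (m + 1) ≤ 0 := nonpos_of_forall_mul_pow_le m.succ_ne_zero fun t ht => by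
      simpa [← hN0, mul_pow, mul_assoc, mul_comm] using hscale t ht
    have hA : A ≤ 0 := nonpos_of_mul_nonpos_left hA (pow_pos hr _)
    exact (mul_nonpos_of_nonpos_of_nonneg (mul_nonpos_of_nonneg_of_nonpos (by positivity) hA)
      (by positivity)).trans (imagAxisNorm_nonneg r _)
  -- The radius `t * r` minimises the upper bound `exp ((t² - 1) / 2 * N) / t ^ (m + 1)` for `A`.
  set t := √((m + 1) / N)
  have ht : 0 < t := by positivity
  have ht2 : t ^ 2 = (m + 1) / N := sq_sqrt (by positivity)
  have hNt : N = (m + 1) / t ^ 2 := by rw [ht2]; field_simp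
  have hbound : A * r ^ (m + 1) * t ^ 2 ≤ exp 1 * G := by
    refine mul_sq_le_of_mul_rpow_le (κ := m + 1) (by norm_cast; omega) ht
      (imagAxisNorm_nonneg r p) ?_
    rw [← hNt]
    convert hscale t ht using 1
    norm_cast
    ring
  refine le_of_mul_le_mul_left ?_ hr
  calc r * ((m + 1) / exp 1 * A * r ^ m)
      = N / exp 1 * (A * r ^ (m + 1) * t ^ 2) := by
        rw [ht2]
        field_simp
        ring
    _ ≤ N / exp 1 * (exp 1 * G) := by gcongr
    _ = N * G := by field_simp
    _ ≤ r * imagAxisNorm r (derivative p) := hderiv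

theorem splits_iterate_derivative {p : ℝ[X]} (hp : p.Splits) (n : ℕ) :
    (derivative^[n] p).Splits := by
  induction n with
  | zero => exact hp
  | succ n ih => exact Function.iterate_succ_apply' derivative n p ▸ splits_derivative ih

theorem le_imagAxisNorm_iterate_derivative {p : ℝ[X]} (hp : p.Splits) {A : ℝ} {m : ℕ}
    (hm : 1 ≤ m) (n : ℕ) (h : ∀ r > 0, A * r ^ (m + n) ≤ imagAxisNorm r p) {r : ℝ} (hr : 0 < r) :
    (m + n).descFactorial n / exp 1 ^ n * A * r ^ m ≤ imagAxisNorm r (derivative^[n] p) := by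
  induction n generalizing p A with
  | zero => simpa using h r hr
  | succ n ih =>
    have := ih (splits_derivative hp) fun s hs =>
      le_imagAxisNorm_derivative hp (m := m + n) (by omega) h hs
    rw [Function.iterate_succ_apply]
    convert this using 2
    rw [← add_assoc, Nat.succ_descFactorial_succ, pow_succ]
    push_cast
    ring

end ImagAxisNorm

section LowDegreeCoefficients

open Polynomial

/-- The value at `0` of the Laguerre expression `p'² - p p''`. Divided by `p(0)²` it is the sum of
the inverse squares of the roots of `p`. -/
def laguerreAtZero {R : Type*} [CommRing R] (p : R[X]) : R :=
  p.coeff 1 ^ 2 - 2 * p.coeff 0 * p.coeff 2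

theorem laguerreAtZero_mul {R : Type*} [CommRing R] (p q : R[X]) :
    laguerreAtZero (p * q) =
      laguerreAtZero p * q.coeff 0 ^ 2 + p.coeff 0 ^ 2 * laguerreAtZero q := by
  have mul_coeff_two : (p * q).coeff 2 =
      p.coeff 0 * q.coeff 2 + p.coeff 1 * q.coeff 1 + p.coeff 2 * q.coeff 0 := by
    simp [coeff_mul, Finset.Nat.antidiagonal_succ, add_assoc]
  rw [laguerreAtZero, laguerreAtZero, laguerreAtZero, mul_coeff_zero, mul_coeff_one, mul_coeff_two]
  ring

theorem imagAxisNorm_le_of_coeff_zero_ne_zero {p : ℝ[X]} (hp : p.Splits) (hp0 : p.coeff 0 ≠ 0)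
    (r : ℝ) :
    imagAxisNorm r p ≤
      |p.coeff 0| * exp (laguerreAtZero p / p.coeff 0 ^ 2 * (r ^ 2 / 2)) := by
  induction hp using Submonoid.closure_induction with
  | mem p hp =>
    rcases hp with ⟨a, rfl⟩ | ⟨a, rfl⟩
    · simp [imagAxisNorm_C, laguerreAtZero]
    · have ha : a ≠ 0 := by simpa using hp0
      have hnorm : imagAxisNorm r (X + C a) = √(a ^ 2 + r ^ 2) := by
        simpa [add_comm] using imagAxisNorm_C_add_C_mul_X r a 1
      have hcoeff : laguerreAtZero (X + C a) = 1 := by simp [laguerreAtZero, coeff_X, coeff_C]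
      rw [hnorm, hcoeff, coeff_add, coeff_X_zero, coeff_C_zero, zero_add,
        sqrt_le_left (by positivity), mul_pow, sq_abs, ← exp_nat_mul]
      calc a ^ 2 + r ^ 2 = a ^ 2 * (r ^ 2 / a ^ 2 + 1) := by field_simp; ring
        _ ≤ a ^ 2 * exp (r ^ 2 / a ^ 2) := by gcongr; exact add_one_le_exp _
        _ = _ := by congr 2; push_cast; ring
  | one => simp [laguerreAtZero, coeff_one]
  | mul p q _ _ ihp ihq =>
    obtain ⟨hp0', hq0'⟩ := mul_ne_zero_iff.mp (mul_coeff_zero p q ▸ hp0)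
    have hsplit : laguerreAtZero (p * q) / (p * q).coeff 0 ^ 2 =
        laguerreAtZero p / p.coeff 0 ^ 2 + laguerreAtZero q / q.coeff 0 ^ 2 := by
      rw [laguerreAtZero_mul, mul_coeff_zero]
      field_simp
    rw [hsplit, add_mul, exp_add, map_mul, mul_coeff_zero, abs_mul, mul_mul_mul_comm]
    exact mul_le_mul (ihp hp0') (ihq hq0') (imagAxisNorm_nonneg r q) (by positivity)

theorem le_abs_coeff_zero_of_forall_le_imagAxisNorm {p : ℝ[X]} {A : ℝ}
    (h : ∀ r > 0, A ≤ imagAxisNorm r p) : A ≤ |p.coeff 0| := by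
  have hcont : Continuous fun r : ℝ => imagAxisNorm r p := by
    simp only [imagAxisNorm_apply]
    fun_prop
  have hlim := (hcont.tendsto 0).mono_left (nhdsWithin_le_nhds (s := Set.Ioi 0))
  have hzero : imagAxisNorm 0 p = |p.coeff 0| := by
    simp [imagAxisNorm_apply, ← coeff_zero_eq_aeval_zero']
  exact hzero ▸ ge_of_tendsto hlim (eventually_nhdsWithin_of_forall h)

theorem le_abs_or_le_abs_of_le_sq_add {A B a b c T : ℝ} (hc : 0 < c)
    (hT : T ≤ a ^ 2 + 2 * c * |b|) (hA : A ≤ exp (1 / 2) * √T) (hB : B * c ≤ exp (1 / 2) * T) :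
    A ≤ exp 1 * |a| ∨ B ≤ exp 1 ^ 2 * |b| := by
  have hsq : exp (1 / 2) ^ 2 = exp 1 := by rw [← exp_nat_mul]; norm_num
  have he := exp_one_gt_d9
  rcases le_total (2 * c * |b|) (a ^ 2) with hdom | hdom
  · left
    have hsqrt : √T ≤ exp (1 / 2) * |a| := by
      rw [sqrt_le_left (by positivity), mul_pow, hsq, sq_abs]
      nlinarith [sq_nonneg a]
    calc A ≤ exp (1 / 2) * √T := hA
      _ ≤ exp (1 / 2) * (exp (1 / 2) * |a|) := by gcongr
      _ = exp 1 * |a| := by rw [← hsq]; ring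
  · right
    have hfour : exp (1 / 2) * 4 ≤ exp 1 ^ 2 := by
      have : 1.6 ≤ exp (1 / 2) := by nlinarith [exp_pos (1 / 2 : ℝ)]
      nlinarith
    refine le_of_mul_le_mul_right ?_ hc
    calc B * c ≤ exp (1 / 2) * T := hB
      _ ≤ exp (1 / 2) * (4 * c * |b|) := by gcongr; linarith
      _ = exp (1 / 2) * 4 * (|b| * c) := by ring
      _ ≤ exp 1 ^ 2 * (|b| * c) := by gcongr
      _ = exp 1 ^ 2 * |b| * c := by ring

theorem le_abs_coeff_one_or_le_abs_coeff_two_of_coeff_zero_ne_zero {p : ℝ[X]} (hp : p.Splits)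
    (hp0 : p.coeff 0 ≠ 0) {A B : ℝ}
    (hA : ∀ r > 0, A * r ≤ imagAxisNorm r p) (hB : ∀ r > 0, B * r ^ 2 ≤ imagAxisNorm r p) :
    A ≤ exp 1 * |p.coeff 1| ∨ B ≤ exp 1 ^ 2 * |p.coeff 2| := by
  have hle := imagAxisNorm_le_of_coeff_zero_ne_zero hp hp0
  set T := laguerreAtZero p with hT
  have hc0 : 0 < |p.coeff 0| := abs_pos.mpr hp0
  rcases le_or_gt T 0 with hT0 | hT0
  · refine .inl (le_trans ?_ (by positivity : 0 ≤ exp 1 * |p.coeff 1|))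
    refine nonpos_of_forall_mul_pow_le one_ne_zero (M := |p.coeff 0|) fun r hr => ?_
    rw [pow_one]
    refine (hA r hr).trans ((hle r).trans (mul_le_of_le_one_right hc0.le (exp_le_one_iff.mpr ?_)))
    exact mul_nonpos_of_nonpos_of_nonneg (div_nonpos_of_nonpos_of_nonneg hT0 (sq_nonneg _))
      (by positivity)
  -- At this radius the exponential factor is `√e`, which makes `A² ≤ e T` and `B |c₀| ≤ √e T`.
  set r := |p.coeff 0| / √T with hr_def
  have hr : 0 < r := by positivity
  have hr2 : r ^ 2 = p.coeff 0 ^ 2 / T := by rw [hr_def, div_pow, sq_abs, sq_sqrt hT0.le]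
  have hF : imagAxisNorm r p ≤ |p.coeff 0| * exp (1 / 2) := by
    convert hle r using 3
    rw [hr2]
    field_simp
  have hA' : A ≤ exp (1 / 2) * √T := by
    have := (hA r hr).trans hF
    rw [hr_def] at this
    field_simp at this
    linarith
  have hB' : B * |p.coeff 0| ≤ exp (1 / 2) * T := by
    have := (hB r hr).trans hF
    rw [hr2, ← sq_abs] at this
    field_simp at this
    linarith
  refine le_abs_or_le_abs_of_le_sq_add hc0 ?_ hA' hB'
  have := neg_abs_le (p.coeff 0 * p.coeff 2)
  rw [abs_mul] at this
  rw [hT, laguerreAtZero]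
  linarith

theorem le_abs_coeff_one_or_le_abs_coeff_two {p : ℝ[X]} (hp : p.Splits) {A B : ℝ}
    (hA : ∀ r > 0, A * r ≤ imagAxisNorm r p) (hB : ∀ r > 0, B * r ^ 2 ≤ imagAxisNorm r p) :
    A ≤ exp 1 * |p.coeff 1| ∨ B ≤ exp 1 ^ 2 * |p.coeff 2| := by
  by_cases hp0 : p.coeff 0 = 0
  · obtain ⟨q, rfl⟩ := X_dvd_iff.mpr hp0
    have hA' : A ≤ |(X * q).coeff 1| := by
      rw [coeff_X_mul]
      refine le_abs_coeff_zero_of_forall_le_imagAxisNorm fun r hr => ?_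
      have := hA r hr
      rw [map_mul, imagAxisNorm_X, abs_of_pos hr, mul_comm] at this
      exact le_of_mul_le_mul_left this hr
    exact .inl (hA'.trans (le_mul_of_one_le_left (abs_nonneg _) (one_le_exp zero_le_one)))
  · exact le_abs_coeff_one_or_le_abs_coeff_two_of_coeff_zero_ne_zero hp hp0 hA hB

theorem le_abs_coeff_or_le_abs_coeff_succ {p : ℝ[X]} (hp : p.Splits) {k : ℕ} (hk : 1 ≤ k)
    {A B : ℝ} (hA : ∀ r > 0, A * r ^ k ≤ imagAxisNorm r p)
    (hB : ∀ r > 0, B * r ^ (k + 1) ≤ imagAxisNorm r p) :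
    A ≤ exp 1 ^ k * |p.coeff k| ∨ B ≤ exp 1 ^ (k + 1) * |p.coeff (k + 1)| := by
  obtain ⟨n, rfl⟩ := Nat.exists_eq_add_of_le hk
  have hcoeff (m : ℕ) : |(derivative^[n] p).coeff m| =
      (m + n).descFactorial n * |p.coeff (m + n)| := by
    rw [coeff_iterate_derivative, nsmul_eq_mul, abs_mul, Nat.abs_cast]
  have hcancel (D : ℝ) (m : ℕ) (h : (m + n).descFactorial n / exp 1 ^ n * D ≤
      exp 1 ^ m * |(derivative^[n] p).coeff m|) : D ≤ exp 1 ^ (m + n) * |p.coeff (m + n)| := by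
    have hpos : 0 < ((m + n).descFactorial n : ℝ) := by
      exact_mod_cast Nat.descFactorial_pos.mpr (Nat.le_add_left n m)
    rw [hcoeff] at h
    field_simp at h
    rwa [pow_add, mul_comm (exp 1 ^ m)]
  rw [show 1 + n + 1 = 2 + n by ring] at *
  refine (le_abs_coeff_one_or_le_abs_coeff_two (splits_iterate_derivative hp n)
    (fun r hr => ?_) fun r hr => ?_).imp
    (fun h => hcancel A 1 (by simpa using h)) (hcancel B 2)
  · simpa using le_imagAxisNorm_iterate_derivative hp le_rfl n hA hr
  · exact le_imagAxisNorm_iterate_derivative hp one_le_two n hB hr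

end LowDegreeCoefficients

section EsymmGenPoly

open Polynomial

theorem esymm_cons_succ {R : Type*} [CommSemiring R] (a : R) (s : Multiset R) (m : ℕ) :
    (a ::ₘ s).esymm (m + 1) = s.esymm (m + 1) + a * s.esymm m := by
  simp [Multiset.esymm, Multiset.powersetCard_cons, Multiset.sum_map_mul_left]

/-- The generating polynomial `∏ (1 + a X)` of the elementary symmetric functions of `s`. -/
noncomputable def esymmGenPoly {R : Type*} [CommSemiring R] (s : Multiset R) : R[X] :=
  (s.map fun a => C 1 + C a * X).prod

theorem coeff_esymmGenPoly {R : Type*} [CommSemiring R] (s : Multiset R) (m : ℕ) :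
    (esymmGenPoly s).coeff m = s.esymm m := by
  induction s using Multiset.induction_on generalizing m with
  | empty =>
    cases m <;>
      simp [esymmGenPoly, Multiset.esymm, coeff_one, Multiset.powersetCard_zero_right]
  | cons a s ih =>
    have hcons : esymmGenPoly (a ::ₘ s) = esymmGenPoly s + C a * (X * esymmGenPoly s) := by
      simp [esymmGenPoly, add_mul, mul_assoc]
    cases m with
    | zero => simp [hcons, ih, Multiset.esymm]
    | succ m => simp [hcons, ih, esymm_cons_succ]

theorem splits_esymmGenPoly {K : Type*} [Field K] (s : Multiset K) : (esymmGenPoly s).Splits := by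
  refine Splits.multisetProd fun f hf => ?_
  obtain ⟨a, -, rfl⟩ := Multiset.mem_map.mp hf
  rw [add_comm]
  exact Splits.of_natDegree_le_one natDegree_linear_le

theorem div_rpow_le_one_add {u w : ℝ} (hu : 0 ≤ u) (hw0 : 0 < w) (hw1 : w ≤ 1) :
    (u / w) ^ w ≤ 1 + u := by
  have := geom_mean_le_arith_mean2_weighted hw0.le (sub_nonneg.mpr hw1) (div_nonneg hu hw0.le)
    zero_le_one (add_sub_cancel w 1)
  rw [one_rpow, mul_one, mul_div_cancel₀ u hw0.ne'] at this
  linarith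

theorem rpow_le_imagAxisNorm_one_add_C_mul_X (a r : ℝ) {w : ℝ} (hw0 : 0 < w) (hw1 : w ≤ 1) :
    (|a| * |r| / √w) ^ w ≤ imagAxisNorm r (C 1 + C a * X) := by
  rw [imagAxisNorm_C_add_C_mul_X, one_pow]
  refine le_sqrt_of_sq_le ?_
  rw [← rpow_natCast, ← rpow_mul (by positivity), mul_comm w, rpow_mul (by positivity),
    rpow_natCast, div_pow, sq_sqrt hw0.le, ← abs_mul, sq_abs]
  exact div_rpow_le_one_add (sq_nonneg _) hw0 hw1

theorem le_imagAxisNorm_esymmGenPoly (s : Multiset ℝ) {j : ℕ} (hj : 1 ≤ j) (hjs : j ≤ s.card)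
    {r : ℝ} (hr : 0 < r) :
    (√(s.card / j) * |s.prod| ^ ((1 : ℝ) / s.card)) ^ j * r ^ j ≤
      imagAxisNorm r (esymmGenPoly s) := by
  have hl : 0 < (s.card : ℝ) := by exact_mod_cast hj.trans hjs
  set w : ℝ := j / s.card with hw
  have hw0 : 0 < w := by positivity
  have hw1 : w ≤ 1 := (div_le_one hl).mpr (by exact_mod_cast hjs)
  have hprod : (s.map fun a => |a| * |r| / √w).prod = |s.prod| * (r / √w) ^ s.card := by
    have habs : (s.map fun a => |a|).prod = |s.prod| := (map_multiset_prod absHom s).symm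
    simp only [mul_div_assoc, Multiset.prod_map_mul, habs, abs_of_pos hr, Multiset.map_const',
      Multiset.prod_replicate]
  have hexp : (r / √w) ^ j = ((r / √w) ^ s.card) ^ w := by
    rw [← rpow_natCast_mul (by positivity), mul_div_cancel₀ _ hl.ne', rpow_natCast]
  calc (√(s.card / j) * |s.prod| ^ ((1 : ℝ) / s.card)) ^ j * r ^ j
      = |s.prod| ^ w * (r / √w) ^ j := by
        have hsqrt : √(s.card / j) = (√w)⁻¹ := by rw [hw, ← sqrt_inv, inv_div]
        have hroot : (|s.prod| ^ ((1 : ℝ) / s.card)) ^ j = |s.prod| ^ w := by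
          rw [← rpow_mul_natCast (abs_nonneg _), one_div_mul_eq_div]
        rw [hsqrt, mul_pow, hroot, div_eq_mul_inv, mul_pow]
        ring
    _ = ((s.map fun a => |a| * |r| / √w).prod) ^ w := by
        rw [hprod, mul_rpow (abs_nonneg _) (by positivity), hexp]
    _ = (s.map fun a => (|a| * |r| / √w) ^ w).prod :=
        (multiset_prod_map_rpow s _ (fun a _ => by positivity) w).symm
    _ ≤ (s.map fun a => imagAxisNorm r (C 1 + C a * X)).prod :=
        Multiset.prod_map_le_prod_map₀ _ _ (fun a _ => by positivity)
          fun a _ => rpow_le_imagAxisNorm_one_add_C_mul_X a r hw0 hw1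
    _ = imagAxisNorm r (esymmGenPoly s) := by
        rw [esymmGenPoly, map_multiset_prod, Multiset.map_map]; rfl

end EsymmGenPoly

section EsymmMean

open Polynomial

/-- The elementary symmetric mean `s_m` of the members of a multiset, which frees `smean` from
its indexing by `Fin n`. -/
noncomputable def esymmMean {K : Type*} [Field K] (s : Multiset K) (m : ℕ) : K :=
  s.esymm m / s.card.choose m

theorem smean_eq_esymmMean (n m : ℕ) (y : Fin n → ℝ) :
    smean n m y = esymmMean (univ.val.map y) m := by
  simp only [smean, esymmS, esymmMean, Finset.esymm_map_val, Multiset.card_map, Finset.card_val,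
    Finset.card_univ, Fintype.card_fin]

theorem esymmMean_card {K : Type*} [Field K] (s : Multiset K) : esymmMean s s.card = s.prod := by
  simp [esymmMean, Multiset.esymm]

/-- Differentiating `∏ (X - a)` keeps it real-rooted and only drops the last mean. -/
theorem exists_card_eq_and_esymmMean_eq {s : Multiset ℝ} {n : ℕ} (hs : s.card = n + 1) :
    ∃ t : Multiset ℝ, t.card = n ∧ ∀ m ≤ n, esymmMean t m = esymmMean s m := by
  set p := (s.map fun a => X - C a).prod with hp
  have hcoeff (m : ℕ) (hm : m ≤ n) :
      (derivative p).coeff (n - m) = (-1) ^ m * s.esymm m * (n + 1 - m : ℕ) := by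
    rw [coeff_derivative, hp, Multiset.prod_X_sub_C_coeff s (by omega),
      show s.card - (n - m + 1) = m by omega, Nat.sub_add_comm hm]
    push_cast
    rfl
  have hcoeff_n : (derivative p).coeff n = n + 1 := by
    simpa [Multiset.esymm] using hcoeff 0 n.zero_le
  have hdeg : (derivative p).natDegree = n := by
    refine natDegree_eq_of_le_of_coeff_ne_zero ((natDegree_derivative_le p).trans ?_)
      (hcoeff_n ▸ n.cast_add_one_ne_zero)
    rw [hp, natDegree_multiset_prod_X_sub_C_eq_card, hs, Nat.add_sub_cancel]
  have hsplits : (derivative p).Splits := by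
    refine splits_derivative (Splits.multisetProd fun f hf => ?_)
    obtain ⟨a, -, rfl⟩ := Multiset.mem_map.mp hf
    exact Splits.X_sub_C a
  refine ⟨(derivative p).roots, by rw [← hsplits.natDegree_eq_card_roots, hdeg], fun m hm => ?_⟩
  have hesymm : (n + 1) * (derivative p).roots.esymm m = s.esymm m * (n + 1 - m : ℕ) := by
    have := coeff_eq_esymm_roots_of_splits hsplits (k := n - m) (by omega)
    rw [hcoeff m hm, leadingCoeff, hdeg, hcoeff_n, Nat.sub_sub_self hm] at this
    have hsign : ((-1) ^ m : ℝ) ≠ 0 := by simp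
    refine mul_left_cancel₀ hsign ?_
    linarith
  have hchoose : (n.choose m : ℝ) * (n + 1) = (n + 1).choose m * (n + 1 - m : ℕ) := by
    exact_mod_cast n.choose_mul_succ_eq m
  have hpos : (0 : ℝ) < n.choose m := by exact_mod_cast Nat.choose_pos hm
  have hpos' : (0 : ℝ) < (n + 1).choose m := by exact_mod_cast Nat.choose_pos (hm.trans n.le_succ)
  rw [esymmMean, esymmMean, hs, ← hsplits.natDegree_eq_card_roots, hdeg,
    div_eq_div_iff hpos.ne' hpos'.ne']
  refine mul_left_cancel₀ (n.cast_add_one_ne_zero : (n + 1 : ℝ) ≠ 0) ?_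
  linear_combination (n + 1).choose m * hesymm - s.esymm m * hchoose

theorem exists_card_eq_and_esymmMean_eq_of_le {s : Multiset ℝ} {l : ℕ} (hl : l ≤ s.card) :
    ∃ t : Multiset ℝ, t.card = l ∧ ∀ m ≤ l, esymmMean t m = esymmMean s m := by
  induction hl using Nat.decreasingInduction with
  | self => exact ⟨s, rfl, fun _ _ => rfl⟩
  | of_succ l _ ih =>
    obtain ⟨u, hu, hus⟩ := ih
    obtain ⟨t, ht, htu⟩ := exists_card_eq_and_esymmMean_eq hu
    exact ⟨t, ht, fun m hm => (htu m hm).trans (hus m (hm.trans l.le_succ))⟩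

theorem choose_le_exp_mul_div_pow {n j : ℕ} (hj : 1 ≤ j) :
    (n.choose j : ℝ) ≤ (exp 1 * (n / j)) ^ j := by
  have hj0 : 0 < (j : ℝ) := by exact_mod_cast hj
  calc (n.choose j : ℝ) ≤ n ^ j / j.factorial := Nat.choose_le_pow_div j n
    _ = j ^ j / j.factorial * (n / j) ^ j := by rw [div_pow]; field_simp
    _ ≤ exp j * (n / j) ^ j := by gcongr; exact pow_div_factorial_le_exp _ hj0.le j
    _ = (exp 1 * (n / j)) ^ j := by rw [mul_pow, exp_one_pow]

theorem le_exp_two_mul_abs_esymmMean_rpow {s : Multiset ℝ} {j : ℕ} (hj : 1 ≤ j)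
    (hjs : j ≤ s.card) {x : ℝ} (h : (√(s.card / j) * x) ^ j ≤ exp 1 ^ j * |s.esymm j|) :
    x ≤ exp 2 * (((s.card : ℝ) / j) ^ ((1 : ℝ) / 2) * |esymmMean s j| ^ ((1 : ℝ) / j)) := by
  have hj0 : 0 < (j : ℝ) := by exact_mod_cast hj
  have hs0 : 0 < (s.card : ℝ) := by exact_mod_cast hj.trans hjs
  set ρ : ℝ := s.card / j
  have hρ : 0 < ρ := div_pos hs0 hj0
  set y := |esymmMean s j| ^ ((1 : ℝ) / j) with hy
  have hesymm : |s.esymm j| = s.card.choose j * y ^ j := by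
    have hchoose : (0 : ℝ) < s.card.choose j := by exact_mod_cast Nat.choose_pos hjs
    rw [hy, one_div, rpow_inv_natCast_pow (abs_nonneg _) (by omega), esymmMean, abs_div,
      abs_of_pos hchoose, mul_div_cancel₀ _ hchoose.ne']
  have hpow : (√ρ * x) ^ j ≤ (√ρ * (exp 2 * (√ρ * y))) ^ j :=
    calc (√ρ * x) ^ j ≤ exp 1 ^ j * (s.card.choose j * y ^ j) := hesymm ▸ h
      _ ≤ exp 1 ^ j * ((exp 1 * ρ) ^ j * y ^ j) := by
          gcongr; exact choose_le_exp_mul_div_pow hj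
      _ = ((exp 1 * exp 1) * (ρ * y)) ^ j := by ring
      _ = (exp (1 + 1) * ((√ρ * √ρ) * y)) ^ j := by rw [exp_add, mul_self_sqrt hρ.le]
      _ = (√ρ * (exp 2 * (√ρ * y))) ^ j := by norm_num; ring
  rw [← sqrt_eq_rpow]
  exact le_of_mul_le_mul_left (le_of_pow_le_pow_left₀ (by omega) (by positivity) hpow)
    (sqrt_pos.mpr hρ)

theorem abs_prod_rpow_le_max_abs_esymmMean_rpow {s : Multiset ℝ} {k : ℕ} (hk : 1 ≤ k)
    (hks : k < s.card) :
    |s.prod| ^ ((1 : ℝ) / s.card) ≤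
      exp 2 * max (((s.card : ℝ) / k) ^ ((1 : ℝ) / 2) * |esymmMean s k| ^ ((1 : ℝ) / k))
        (((s.card : ℝ) / (k + 1)) ^ ((1 : ℝ) / 2) *
          |esymmMean s (k + 1)| ^ ((1 : ℝ) / (k + 1))) := by
  have hlower {j : ℕ} (hj : 1 ≤ j) (hjs : j ≤ s.card) (r : ℝ) (hr : r > 0) :=
    le_imagAxisNorm_esymmGenPoly s hj hjs hr
  have hcoeff := le_abs_coeff_or_le_abs_coeff_succ (splits_esymmGenPoly s) hk
    (hlower hk hks.le) (hlower k.succ_pos hks)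
  rw [coeff_esymmGenPoly, coeff_esymmGenPoly] at hcoeff
  rw [mul_max_of_nonneg _ _ (exp_pos 2).le, le_max_iff]
  exact hcoeff.imp (le_exp_two_mul_abs_esymmMean_rpow hk hks.le) fun h => by
    exact_mod_cast le_exp_two_mul_abs_esymmMean_rpow k.succ_pos hks h

end EsymmMean

theorem maclaurin_type_inequality :
    ∃ C : ℝ, 0 < C ∧ ∀ (n : ℕ), 1 ≤ n → ∀ (y : Fin n → ℝ) (k ℓ : ℕ),
      1 ≤ k → k < ℓ → ℓ ≤ n →
      |smean n ℓ y| ^ ((1 : ℝ) / ℓ) ≤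
        C * max (((ℓ : ℝ) / k) ^ ((1 : ℝ) / 2) * |smean n k y| ^ ((1 : ℝ) / k))
          (((ℓ : ℝ) / (k + 1)) ^ ((1 : ℝ) / 2) * |smean n (k + 1) y| ^ ((1 : ℝ) / (k + 1))) := by
  refine ⟨exp 2, exp_pos 2, fun n _ y k ℓ hk hkl hln => ?_⟩
  obtain ⟨t, rfl, hmean⟩ := exists_card_eq_and_esymmMean_eq_of_le
    (s := univ.val.map y) (l := ℓ) (by simpa using hln)
  have hsmean (m : ℕ) (hm : m ≤ t.card) : smean n m y = esymmMean t m :=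
    (smean_eq_esymmMean n m y).trans (hmean m hm).symm
  rw [hsmean _ le_rfl, hsmean k hkl.le, hsmean (k + 1) hkl, esymmMean_card]
  exact abs_prod_rpow_le_max_abs_esymmMean_rpow hk hkl
end

section
/- For every n ≥ 1, all real numbers y_1, …, y_n, and all integers 1 ≤ k < ℓ ≤ n, one has |s_ℓ(y)|^(1/ℓ) ≤ 160·e^7 · max( (ℓ/k)^(1/2) · |s_k(y)|^(1/k), (ℓ/(k+1))^(1/2) · |s_{k+1}(y)|^(1/(k+1)) ). -/
open Finset Real

/-! Differentiating and reversing preserve real-rootedness, so every window `s_j, …, s_{j+N}` of the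
sequence `s_m(y)` gives a real-rooted polynomial `p = ∑ᵢ (N choose i) s_{j+i} Xⁱ`. On the imaginary
axis such a polynomial cannot be small: `|p(ir)|²` is the product of the factors `r² + x²` over its
roots `x`, up to the leading coefficient, and superadditivity of the geometric mean bounds it below
by `|s_j|² (1 + (μr)²)^N`, where `|s_{j+N}| = |s_j| μ^N`. The triangle inequality bounds `|p(ir)|`
above by the sizes of the `s_{j+i}`.

Normalise `|s_ℓ| = (1000 √ℓ θ)^ℓ` and let `j ≤ K = k + 1` be a point where a line through the
value `ℓ log θ` at `ℓ` supports `log |s_i|` from above, after dividing `|s_i|` by the weight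
`√(K (K - 1) ⋯ (K - i + 1))`. End the window at the later index where `s` is steepest as seen from
`j`. If `j < k`, the two bounds for `|p(ir)|` contradict each other for a suitable `r`. So `j` is
`k` or `k + 1`, and the supporting line, which starts at a nonnegative value because `s_0 = 1`, lies
above `j log θ` at `j`; this bounds `|s_j|` from below.
-/

open Polynomial

section RealRooted

theorem splits_reverse {K : Type*} [Field K] {p : K[X]} (hp : p.Splits) : p.reverse.Splits := by
  induction hp using Submonoid.closure_induction with
  | mem q hq =>
    refine Splits.of_natDegree_le_one ((reverse_natDegree_le q).trans ?_)
    rcases hq with ⟨a, rfl⟩ | ⟨a, rfl⟩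
    · simp
    · simp
  | one => simp [← C_1, -map_one]
  | mul p q _ _ hp hq => simpa only [reverse_mul_of_domain] using hp.mul hq

theorem splits_reflect {K : Type*} [Field K] {p : K[X]} (hp : p.Splits) {N : ℕ}
    (hN : p.natDegree ≤ N) : (p.reflect N).Splits := by
  have h : p.reflect N = p.reverse * X ^ (N - p.natDegree) := by
    have := reflect_mul p 1 le_rfl (natDegree_one.le.trans (Nat.zero_le (N - p.natDegree)))
    rwa [mul_one, Nat.add_sub_cancel' hN, reflect_one] at this
  exact h ▸ (splits_reverse hp).mul (Splits.X_pow _)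

theorem norm_aeval_le_sum {p : ℝ[X]} {N : ℕ} (hN : p.natDegree ≤ N) (z : ℂ) :
    ‖aeval z p‖ ≤ ∑ i ∈ range (N + 1), |p.coeff i| * ‖z‖ ^ i := by
  rw [aeval_eq_sum_range' (Nat.lt_succ_of_le hN)]
  refine (norm_sum_le _ _).trans_eq (sum_congr rfl fun i _ ↦ ?_)
  rw [norm_smul, norm_pow, Real.norm_eq_abs]

theorem normSq_aeval_mul_I {p : ℝ[X]} (hp : p.Splits) (r : ℝ) :
    Complex.normSq (aeval (r * Complex.I) p) =
      p.leadingCoeff ^ 2 * (p.roots.map fun x ↦ r ^ 2 + x ^ 2).prod := by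
  have factor (x : ℝ) : Complex.normSq (r * Complex.I - x) = r ^ 2 + x ^ 2 := by
    rw [show (r * Complex.I - x : ℂ) = (-x : ℝ) + r * Complex.I by push_cast; ring,
      Complex.normSq_add_mul_I]
    ring
  conv_lhs => rw [hp.eq_prod_roots]
  simp [map_multiset_prod, Multiset.map_map, factor, sq]

theorem add_pow_card_le_prod_map_add {s : Multiset ℝ} (hs : ∀ x ∈ s, 0 ≤ x) {b c : ℝ}
    (hb : 0 ≤ b) (hc : 0 < c) (hprod : s.prod = c ^ s.card) :
    (b + c) ^ s.card ≤ (s.map fun x ↦ b + x).prod := by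
  set w := c / (b + c) with hw
  have pointwise (x : ℝ) (hx : 0 ≤ x) : (b + c) * (x / c) ^ w ≤ b + x := by
    have amgm := Real.geom_mean_le_arith_mean2_weighted (w₁ := b / (b + c)) (w₂ := w) (p₁ := 1)
      (p₂ := x / c) (by positivity) (by positivity) zero_le_one (by positivity) (by
        rw [hw]; field_simp)
    rw [Real.one_rpow, one_mul] at amgm
    calc (b + c) * (x / c) ^ w ≤ (b + c) * (b / (b + c) * 1 + w * (x / c)) := by gcongr
      _ = b + x := by rw [hw]; field_simp
  calc (b + c) ^ s.card = (s.map fun x ↦ (b + c) * (x / c) ^ w).prod := by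
        rw [Multiset.prod_map_mul, Multiset.map_const', Multiset.prod_replicate,
          Real.multiset_prod_map_rpow s _ fun x hx ↦ div_nonneg (hs x hx) hc.le,
          Multiset.prod_map_div, Multiset.map_id', hprod, Multiset.map_const',
          Multiset.prod_replicate, div_self (by positivity), Real.one_rpow, mul_one]
    _ ≤ _ := Multiset.prod_map_le_prod_map₀ _ _
        (fun x hx ↦ by have := hs x hx; positivity) fun x hx ↦ pointwise x (hs x hx)

theorem abs_coeff_zero_mul_sqrt_pow_le_sum {p : ℝ[X]} (hp : p.Splits) {N : ℕ}
    (hN : p.natDegree ≤ N) {μ : ℝ} (hμ : 0 < μ) (h : |p.coeff N| = |p.coeff 0| * μ ^ N)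
    {r : ℝ} (hr : 0 ≤ r) :
    |p.coeff 0| * √(1 + (μ * r) ^ 2) ^ N ≤ ∑ i ∈ range (N + 1), |p.coeff i| * r ^ i := by
  rcases eq_or_ne (p.coeff 0) 0 with h0 | h0
  · rw [h0, abs_zero, zero_mul]
    positivity
  have hcoeff : p.coeff N ≠ 0 := abs_pos.1 (h ▸ by positivity)
  have hdeg : p.natDegree = N := hN.antisymm (le_natDegree_of_ne_zero hcoeff)
  have hlead : p.leadingCoeff = p.coeff N := by rw [leadingCoeff, hdeg]
  have hcard : p.roots.card = N := by rw [← hp.natDegree_eq_card_roots, hdeg]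
  have hroots : (p.roots.map (· ^ 2)).prod = ((μ ^ 2)⁻¹) ^ N := by
    have hvieta := congrArg abs hp.coeff_zero_eq_leadingCoeff_mul_prod_roots
    rw [abs_mul, abs_mul, abs_pow, abs_neg, abs_one, one_pow, one_mul, hlead, h, mul_assoc,
      left_eq_mul₀ (abs_ne_zero.2 h0)] at hvieta
    rw [Multiset.prod_map_pow, Multiset.map_id', ← sq_abs, eq_inv_of_mul_eq_one_right hvieta]
    ring
  have hprod := add_pow_card_le_prod_map_add (s := p.roots.map (· ^ 2)) (b := r ^ 2)
    (c := (μ ^ 2)⁻¹) (by simp only [Multiset.mem_map]; rintro _ ⟨x, -, rfl⟩; positivity)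
    (by positivity) (by positivity)
    (by rw [hroots, Multiset.card_map, hcard])
  rw [Multiset.card_map, hcard, Multiset.map_map] at hprod
  have hnorm : |p.coeff 0| * √(1 + (μ * r) ^ 2) ^ N ≤ ‖aeval (r * Complex.I) p‖ := by
    refine (sq_le_sq₀ (by positivity) (norm_nonneg _)).1 ?_
    rw [← Complex.normSq_eq_norm_sq, normSq_aeval_mul_I hp, hlead, ← sq_abs (p.coeff N), h]
    calc (|p.coeff 0| * √(1 + (μ * r) ^ 2) ^ N) ^ 2
        = (|p.coeff 0| * μ ^ N) ^ 2 * (r ^ 2 + (μ ^ 2)⁻¹) ^ N := by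
          simp only [mul_pow |p.coeff 0|]
          rw [pow_right_comm, Real.sq_sqrt (by positivity), pow_right_comm μ, mul_assoc, ← mul_pow]
          field_simp
          ring
      _ ≤ _ := by gcongr; exact hprod
  refine hnorm.trans ((norm_aeval_le_sum hN _).trans_eq ?_)
  simp [abs_of_nonneg hr]

end RealRooted

section Jensen

/-- The `N`-th Jensen polynomial `∑ᵢ (N choose i) a (j + i) Xⁱ` of the sequence `a`, shifted by
`j`. -/
noncomputable def jensenPoly {R : Type*} [Semiring R] (a : ℕ → R) (N j : ℕ) : R[X] :=
  ∑ i ∈ range (N + 1), C (N.choose i * a (j + i)) * X ^ i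

theorem coeff_jensenPoly {R : Type*} [Semiring R] (a : ℕ → R) (N j i : ℕ) :
    (jensenPoly a N j).coeff i = N.choose i * a (j + i) := by
  simp only [jensenPoly, finsetSum_coeff, coeff_C_mul_X_pow, sum_ite_eq, mem_range]
  split_ifs with hi
  · rfl
  · simp [Nat.choose_eq_zero_of_lt (by lia : N < i)]

theorem natDegree_jensenPoly_le {R : Type*} [Semiring R] (a : ℕ → R) (N j : ℕ) :
    (jensenPoly a N j).natDegree ≤ N :=
  natDegree_le_iff_coeff_eq_zero.2 fun i hi ↦ by
    simp [coeff_jensenPoly, Nat.choose_eq_zero_of_lt hi]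

theorem derivative_jensenPoly {R : Type*} [CommSemiring R] (a : ℕ → R) (N j : ℕ) :
    derivative (jensenPoly a (N + 1) j) = C (N + 1 : R) * jensenPoly a N (j + 1) := by
  ext i
  have hchoose : ((N : R) + 1) * N.choose i = (N + 1).choose (i + 1) * (i + 1) := by
    exact_mod_cast congrArg (Nat.cast : ℕ → R) (Nat.add_one_mul_choose_eq N i)
  rw [coeff_derivative, coeff_C_mul, coeff_jensenPoly, coeff_jensenPoly, ← mul_assoc, hchoose,
    show j + (i + 1) = j + 1 + i by lia]
  ring

theorem reflect_derivative_reflect_jensenPoly {R : Type*} [CommSemiring R] (a : ℕ → R) (N j : ℕ) :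
    (derivative ((jensenPoly a (N + 1) j).reflect (N + 1))).reflect N =
      C (N + 1 : R) * jensenPoly a N j := by
  ext i
  rw [coeff_C_mul, coeff_jensenPoly, coeff_reflect, coeff_derivative, coeff_reflect,
    coeff_jensenPoly]
  rcases le_or_gt i N with hi | hi
  · have hchoose : (N.choose i : R) * (N + 1) = (N + 1).choose i * ((N - i : ℕ) + 1) := by
      have := Nat.choose_mul_succ_eq N i
      rw [Nat.sub_add_comm hi] at this
      exact_mod_cast congrArg (Nat.cast : ℕ → R) this
    rw [revAt_le hi, revAt_le (by lia), show N + 1 - (N - i + 1) = i by lia, mul_right_comm,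
      ← hchoose]
    ring
  · rw [revAt_eq_self_of_lt hi, revAt_eq_self_of_lt (by lia), Nat.choose_eq_zero_of_lt hi,
      Nat.choose_eq_zero_of_lt (by lia)]
    simp

theorem splits_jensenPoly_of_succ {a : ℕ → ℝ} {N j : ℕ} (h : (jensenPoly a (N + 1) j).Splits) :
    (jensenPoly a N j).Splits ∧ (jensenPoly a N (j + 1)).Splits := by
  have hcancel (q : ℝ[X]) : (C (N + 1 : ℝ) * q).Splits ↔ q.Splits :=
    splits_mul_iff_right (C_ne_zero.2 (by positivity)) (Splits.C _)
  constructor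
  · have hdeg : (derivative ((jensenPoly a (N + 1) j).reflect (N + 1))).natDegree ≤ N := by
      have := natDegree_reflect_le (N := N + 1) (p := jensenPoly a (N + 1) j)
      have := natDegree_jensenPoly_le a (N + 1) j
      exact (natDegree_derivative_le _).trans (by lia)
    have := splits_reflect (splits_derivative (splits_reflect h (natDegree_jensenPoly_le ..))) hdeg
    rwa [reflect_derivative_reflect_jensenPoly, hcancel] at this
  · have := splits_derivative h
    rwa [derivative_jensenPoly, hcancel] at this

theorem splits_jensenPoly_of_le {a : ℕ → ℝ} {n N j : ℕ} (h : (jensenPoly a n 0).Splits)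
    (hn : j + N ≤ n) : (jensenPoly a N j).Splits := by
  have hshift (j N : ℕ) (h : (jensenPoly a (j + N) 0).Splits) : (jensenPoly a N j).Splits := by
    induction j generalizing N with
    | zero => simpa using h
    | succ j ih => exact (splits_jensenPoly_of_succ (ih (N + 1) (by convert h using 2; lia))).2
  refine Nat.decreasingInduction' (P := fun m ↦ (jensenPoly a m 0).Splits) ?_ hn h |> hshift j N
  exact fun m _ _ hm ↦ (splits_jensenPoly_of_succ hm).1

theorem abs_mul_sqrt_pow_le_sum_of_splits {a : ℕ → ℝ} {N j : ℕ} (h : (jensenPoly a N j).Splits)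
    {μ : ℝ} (hμ : 0 < μ) (hN : |a (j + N)| = |a j| * μ ^ N) {r : ℝ} (hr : 0 ≤ r) :
    |a j| * √(1 + (μ * r) ^ 2) ^ N ≤
      ∑ i ∈ range (N + 1), N.choose i * |a (j + i)| * r ^ i := by
  simpa [coeff_jensenPoly, abs_mul] using
    abs_coeff_zero_mul_sqrt_pow_le_sum h (natDegree_jensenPoly_le a N j) hμ
      (by simpa [coeff_jensenPoly] using hN) hr

end Jensen

section SymmetricMeans

theorem smean_zero (n : ℕ) (y : Fin n → ℝ) : smean n 0 y = 1 := by simp [smean, esymmS]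

theorem jensenPoly_smean (n : ℕ) (y : Fin n → ℝ) :
    jensenPoly (smean n · y) n 0 = ∏ i, (1 + C (y i) * X) := by
  rw [prod_one_add, sum_powerset, card_univ, Fintype.card_fin]
  refine sum_congr rfl fun m hm ↦ ?_
  have hchoose : (n.choose m : ℝ) ≠ 0 := by
    exact_mod_cast (Nat.choose_pos (Nat.lt_succ_iff.1 (mem_range.1 hm))).ne'
  beta_reduce
  rw [zero_add, smean, mul_div_cancel₀ _ hchoose, esymmS, map_sum, sum_mul]
  refine sum_congr rfl fun A hA ↦ ?_
  rw [prod_mul_distrib, prod_const, (mem_powersetCard.1 hA).2, map_prod]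

theorem splits_jensenPoly_smean (n : ℕ) (y : Fin n → ℝ) :
    (jensenPoly (smean n · y) n 0).Splits := by
  rw [jensenPoly_smean]
  refine Splits.prod fun i _ ↦ Splits.of_natDegree_le_one ?_
  compute_degree

end SymmetricMeans

section Estimates

theorem pow_self_le_three_pow_mul_factorial (i : ℕ) : (i : ℝ) ^ i ≤ 3 ^ i * i.factorial := by
  have h := Real.pow_div_factorial_le_exp (i : ℝ) (Nat.cast_nonneg _) i
  rw [div_le_iff₀ (by positivity), ← Real.exp_one_pow] at h
  exact h.trans (by gcongr; exact Real.exp_one_lt_three.le)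

theorem pow_mul_factorial_le_pow_mul_descFactorial {j n : ℕ} (h : j ≤ n) :
    n ^ j * j.factorial ≤ j ^ j * n.descFactorial j := by
  rw [← Nat.descFactorial_self, Nat.descFactorial_eq_prod_range, Nat.descFactorial_eq_prod_range,
    pow_eq_prod_const, pow_eq_prod_const, ← prod_mul_distrib, ← prod_mul_distrib]
  refine prod_le_prod' fun i _ ↦ ?_
  rw [Nat.mul_sub, Nat.mul_sub, mul_comm n j]
  gcongr

theorem half_sqrt_pow_le_sqrt_descFactorial {j n : ℕ} (h : j ≤ n) :
    (√n / 2) ^ j ≤ √(n.descFactorial j : ℝ) := by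
  have hfact : (n : ℝ) ^ j * j.factorial ≤ j ^ j * n.descFactorial j := by
    exact_mod_cast pow_mul_factorial_le_pow_mul_descFactorial h
  have hthree : (n : ℝ) ^ j ≤ 3 ^ j * n.descFactorial j := by
    refine le_of_mul_le_mul_right (hfact.trans ?_) (by positivity : (0 : ℝ) < j.factorial)
    grw [pow_self_le_three_pow_mul_factorial j]
    exact (mul_right_comm ..).le
  refine Real.le_sqrt_of_sq_le ?_
  rw [pow_right_comm, div_pow, Real.sq_sqrt (Nat.cast_nonneg _), div_pow,
    div_le_iff₀ (by positivity), mul_comm]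
  refine hthree.trans ?_
  gcongr
  norm_num

theorem sqrt_descFactorial_add_le (n j i : ℕ) :
    √(n.descFactorial (j + i) : ℝ) ≤ √(n.descFactorial j : ℝ) * √((n - j : ℕ) : ℝ) ^ i := by
  rw [← Nat.descFactorial_mul_descFactorial (Nat.le_add_right j i), Nat.add_sub_cancel_left,
    mul_comm, Nat.cast_mul, Real.sqrt_mul (Nat.cast_nonneg _)]
  gcongr
  rw [Real.sqrt_le_left (by positivity), pow_right_comm, Real.sq_sqrt (Nat.cast_nonneg _)]
  exact_mod_cast Nat.descFactorial_le_pow (n - j) i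

theorem exp_le_sqrt_one_add_pow {w : ℝ} (hw : 0 ≤ w) (hw1 : w ≤ 1) (N : ℕ) :
    exp (N * w / 4) ≤ √(1 + w) ^ N := by
  have hexp : exp (w / 2) ≤ 1 + w := by
    have hneg := Real.add_one_le_exp (-(w / 2))
    have hinv : exp (w / 2) * exp (-(w / 2)) = 1 := by rw [← Real.exp_add]; simp
    nlinarith [Real.exp_pos (w / 2)]
  calc exp (N * w / 4) = exp (w / 4) ^ N := by rw [← Real.exp_nat_mul]; ring_nf
    _ ≤ √(1 + w) ^ N := by
        gcongr
        refine Real.le_sqrt_of_sq_le (le_of_eq_of_le ?_ hexp)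
        rw [← Real.exp_nat_mul]
        ring_nf

theorem sum_choose_mul_le_exp {f : ℕ → ℝ} {M x r : ℝ} {N m : ℕ} (hM : 0 ≤ M) (hx : 0 ≤ x)
    (hr : 0 ≤ r) (hf : ∀ i < m, f i ≤ M * x ^ i) :
    ∑ i ∈ range m, N.choose i * f i * r ^ i ≤ M * exp (N * x * r) := by
  calc ∑ i ∈ range m, N.choose i * f i * r ^ i
      ≤ ∑ i ∈ range m, (N ^ i / i.factorial : ℝ) * (M * x ^ i) * r ^ i := by
        refine sum_le_sum fun i hi ↦ ?_
        grw [hf i (mem_range.1 hi), Nat.choose_le_pow_div i N]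
    _ = M * ∑ i ∈ range m, (N * x * r) ^ i / i.factorial := by
        rw [mul_sum]
        exact sum_congr rfl fun i _ ↦ by rw [mul_pow, mul_pow]; ring
    _ ≤ M * exp (N * x * r) := by
        gcongr
        exact Real.sum_le_exp_of_nonneg (by positivity) m

theorem sum_Ico_choose_mul_le {f : ℕ → ℝ} {M x r δ : ℝ} {N m : ℕ} (hM : 0 ≤ M) (hx : 0 ≤ x)
    (hr : 0 ≤ r) (hδ : 0 ≤ δ) (hδ3 : 3 * δ < 1) (hxr : N * x * r ≤ δ * √m)
    (hf : ∀ i ∈ Ico (m + 1) (N + 1), f i ≤ M * (x * √i) ^ i) :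
    ∑ i ∈ Ico (m + 1) (N + 1), N.choose i * f i * r ^ i ≤
      M * ((3 * δ) ^ (m + 1) / (1 - 3 * δ)) := by
  have term (i : ℕ) (hi : i ∈ Ico (m + 1) (N + 1)) :
      N.choose i * f i * r ^ i ≤ M * (3 * δ) ^ i := by
    have hmi : (m : ℝ) ≤ i := by exact_mod_cast (by grind : m ≤ i)
    calc N.choose i * f i * r ^ i
        ≤ (N ^ i / i.factorial : ℝ) * (M * (x * √i) ^ i) * r ^ i := by
          grw [hf i hi, Nat.choose_le_pow_div i N]
      _ = M * ((N * x * r * √i) ^ i / i.factorial) := by simp only [mul_pow]; ring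
      _ ≤ M * ((δ * √i * √i) ^ i / i.factorial) := by grw [hxr, hmi]
      _ = M * (δ ^ i * (i ^ i / i.factorial)) := by
          rw [mul_assoc δ, Real.mul_self_sqrt (Nat.cast_nonneg _), mul_pow, mul_div_assoc]
      _ ≤ M * (3 * δ) ^ i := by
          rw [mul_comm 3 δ, mul_pow]
          gcongr
          exact (div_le_iff₀ (by positivity)).2 (pow_self_le_three_pow_mul_factorial i)
  grw [sum_le_sum term, ← mul_sum, geom_sum_Ico_le_of_lt_one (by positivity) hδ3]

theorem exp_add_tail_lt_exp {m : ℕ} (hm : 2 ≤ m) :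
    exp ((1 / 125 : ℝ) ^ 2 * m / 8) + (3 * (1 / 125) : ℝ) ^ (m + 1) / (1 - 3 * (1 / 125)) <
      exp ((1 / 125 : ℝ) ^ 2 * m / 4) := by
  have hm' : (2 : ℝ) ≤ m := by exact_mod_cast hm
  have htail : (3 * (1 / 125) : ℝ) ^ (m + 1) / (1 - 3 * (1 / 125)) < 1 / 62500 := by
    rw [div_lt_iff₀ (by norm_num)]
    calc (3 * (1 / 125) : ℝ) ^ (m + 1) ≤ (3 * (1 / 125)) ^ 3 :=
          pow_le_pow_of_le_one (by norm_num) (by norm_num) (by lia)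
      _ < 1 / 62500 * (1 - 3 * (1 / 125)) := by norm_num
  have hsq : exp ((1 / 125 : ℝ) ^ 2 * m / 4) = exp ((1 / 125 : ℝ) ^ 2 * m / 8) ^ 2 := by
    rw [← Real.exp_nat_mul]; ring_nf
  have hexp := Real.add_one_le_exp ((1 / 125 : ℝ) ^ 2 * m / 8)
  rw [hsq]
  generalize exp ((1 / 125 : ℝ) ^ 2 * m / 8) = z at hexp ⊢
  have hz : z + 1 / 62500 ≤ z ^ 2 := by nlinarith
  linarith

end Estimates

section Extremal

theorem exists_mul_pow_bound_attained {ι : Type*} {s : Finset ι} (hs : s.Nonempty) {f w : ι → ℝ}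
    {p : ι → ℕ} (hf : ∀ i ∈ s, 0 ≤ f i) (hw : ∀ i ∈ s, 0 < w i) (hp : ∀ i ∈ s, p i ≠ 0) :
    ∃ c, 0 ≤ c ∧ (∀ i ∈ s, f i ≤ w i * c ^ p i) ∧ ∃ i ∈ s, f i = w i * c ^ p i := by
  obtain ⟨i, hi, hmax⟩ := s.exists_max_image (fun i ↦ (f i / w i) ^ (p i : ℝ)⁻¹) hs
  have hdiv (i) (hi : i ∈ s) : 0 ≤ f i / w i := div_nonneg (hf i hi) (hw i hi).le
  have hroot (i) (hi : i ∈ s) : f i = w i * ((f i / w i) ^ (p i : ℝ)⁻¹) ^ p i := by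
    rw [Real.rpow_inv_natCast_pow (hdiv i hi) (hp i hi), mul_div_cancel₀ _ (hw i hi).ne']
  refine ⟨_, Real.rpow_nonneg (hdiv i hi) _, fun l hl ↦ ?_, i, hi, hroot i hi⟩
  have hdivl := hdiv l hl
  have hwl := hw l hl
  calc f l = w l * ((f l / w l) ^ (p l : ℝ)⁻¹) ^ p l := hroot l hl
    _ ≤ _ := by gcongr; exact hmax l hl

-- With `r = δ √m / (Λ N)`, the left side of `hlower` is at least `f 0 * exp (δ² m / 4)`. If
-- `(8 / δ) β ≤ Λ`, then the terms `i ≤ m` on the right contribute at most `f 0 * exp (δ² m / 8)`.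
-- The later terms are `O(δ ^ (m + 1))`, negligible against the gap of order `δ²` because `2 ≤ m`;
-- `δ = 1 / 125` is small enough.
theorem lt_mul_of_window {f : ℕ → ℝ} {N m : ℕ} {Λ β : ℝ} (h0 : 0 < f 0) (hm : 2 ≤ m)
    (hmN : m ≤ N) (hΛ : 0 < Λ) (hβ : 0 ≤ β)
    (hlower : ∀ r, 0 ≤ r →
      f 0 * √(1 + (Λ * √N * r) ^ 2) ^ N ≤ ∑ i ∈ range (N + 1), N.choose i * f i * r ^ i)
    (hhead : ∀ i ≤ m, f i ≤ f 0 * (β * √m) ^ i)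
    (htail : ∀ i ∈ Ico (m + 1) (N + 1), f i ≤ f 0 * (Λ * √i) ^ i) : Λ < 1000 * β := by
  by_contra! hle
  have hN : (0 : ℝ) < N := by exact_mod_cast (by lia : 0 < N)
  have hmN' : (m : ℝ) ≤ N := by exact_mod_cast hmN
  have hsq : √(m : ℝ) ^ 2 = m := Real.sq_sqrt (Nat.cast_nonneg _)
  set r : ℝ := √m / (125 * Λ * N) with hr
  have hwidth : (Λ * √N * r) ^ 2 = (1 / 125) ^ 2 * m / N := by
    rw [hr, mul_pow, mul_pow, div_pow, hsq, Real.sq_sqrt hN.le]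
    field_simp
  have hlow : exp ((1 / 125) ^ 2 * m / 4) ≤ √(1 + (Λ * √N * r) ^ 2) ^ N := by
    rw [hwidth]
    refine le_of_eq_of_le (congrArg exp ?_) (exp_le_sqrt_one_add_pow (by positivity) ?_ N)
    · field_simp
    · rw [div_le_one hN]
      linarith
  have hup_head : ∑ i ∈ range (m + 1), N.choose i * f i * r ^ i ≤
      f 0 * exp ((1 / 125) ^ 2 * m / 8) := by
    refine (sum_choose_mul_le_exp h0.le (by positivity) (by positivity)
      fun i hi ↦ hhead i (Nat.lt_succ_iff.1 hi)).trans ?_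
    gcongr
    calc N * (β * √m) * r = β * √m ^ 2 / (125 * Λ) := by rw [hr]; field_simp
      _ ≤ (1 / 125) ^ 2 * m / 8 := by
        rw [hsq, div_le_iff₀ (by positivity)]
        nlinarith
  have hup_tail := sum_Ico_choose_mul_le (δ := 1 / 125) h0.le hΛ.le (by positivity : 0 ≤ r)
    (by norm_num) (by norm_num) (by rw [hr]; field_simp; rfl) htail
  have hsplit := sum_range_add_sum_Ico (fun i ↦ N.choose i * f i * r ^ i)
    (by lia : m + 1 ≤ N + 1)
  have hlt := mul_lt_mul_of_pos_left (exp_add_tail_lt_exp hm) h0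
  have hge := mul_le_mul_of_nonneg_left hlow h0.le
  linarith [hlower r (by positivity)]

/-- The curve `i ↦ √(K (K - 1) ⋯ (K - i + 1)) θ ^ i c ^ (ℓ - i)` lies above `t` on `[0, K]` and
touches it at `j`. On a logarithmic scale, and apart from the square root, the curve is a line with
value `ℓ log θ` at `ℓ`. The square root is there because passing from `i = j` to `j + i` costs at
most `√(K - j) ^ i`, the growth that `lt_mul_of_window` allows before its index `m = K - j`. -/
structure IsContactIndex (t : ℕ → ℝ) (K ℓ : ℕ) (θ c : ℝ) (j : ℕ) : Prop where
  le : j ≤ K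
  eq : t j = √(K.descFactorial j : ℝ) * θ ^ j * c ^ (ℓ - j)
  bound : ∀ i ≤ K, t i ≤ √(K.descFactorial i : ℝ) * θ ^ i * c ^ (ℓ - i)

theorem sqrt_descFactorial_mul_pow_pos {K i : ℕ} (hi : i ≤ K) {θ : ℝ} (hθ : 0 < θ) :
    0 < √(K.descFactorial i : ℝ) * θ ^ i := by
  have : 0 < K.descFactorial i := Nat.descFactorial_pos.2 hi
  positivity

theorem exists_isContactIndex {t : ℕ → ℝ} (ht : ∀ i, 0 ≤ t i) (h0 : t 0 = 1) {K ℓ : ℕ}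
    (hK : K < ℓ) {θ : ℝ} (hθ : 0 < θ) : ∃ j c, 1 ≤ c ∧ IsContactIndex t K ℓ θ c j := by
  obtain ⟨c, hc, hle, j, hj, heq⟩ := exists_mul_pow_bound_attained
    (s := range (K + 1)) (f := t) (w := fun i ↦ √(K.descFactorial i : ℝ) * θ ^ i)
    (p := fun i ↦ ℓ - i) nonempty_range_add_one (fun i _ ↦ ht i)
    (fun i hi ↦ sqrt_descFactorial_mul_pow_pos (by grind) hθ) (by grind)
  have hone : 1 ≤ c ^ ℓ := by simpa [h0] using hle 0 (by simp)
  exact ⟨j, c, (one_le_pow_iff_of_nonneg hc (by lia)).1 hone, by grind, heq,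
    fun i hi ↦ hle i (by grind)⟩

namespace IsContactIndex

variable {t : ℕ → ℝ} {K ℓ j : ℕ} {θ c : ℝ}

theorem le_apply (h : IsContactIndex t K ℓ θ c j) (hθ : 0 < θ) (hc : 1 ≤ c) :
    √(K.descFactorial j : ℝ) * θ ^ j ≤ t j :=
  h.eq ▸ le_mul_of_one_le_right (sqrt_descFactorial_mul_pow_pos h.le hθ).le (one_le_pow₀ hc)

theorem apply_add_le (h : IsContactIndex t K ℓ θ c j) (hK : K < ℓ) (hθ : 0 < θ) (hc : 0 < c)
    {i : ℕ} (hi : i ≤ K - j) : t (j + i) ≤ t j * (θ / c * √((K - j : ℕ) : ℝ)) ^ i := by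
  have hj := h.le
  have hpow : c ^ (ℓ - j) = c ^ (ℓ - (j + i)) * c ^ i := by
    rw [← pow_add, show ℓ - (j + i) + i = ℓ - j by lia]
  calc t (j + i) ≤ √(K.descFactorial (j + i) : ℝ) * θ ^ (j + i) * c ^ (ℓ - (j + i)) :=
        h.bound _ (by lia)
    _ ≤ √(K.descFactorial j : ℝ) * √((K - j : ℕ) : ℝ) ^ i * θ ^ (j + i) * c ^ (ℓ - (j + i)) := by
        gcongr
        exact sqrt_descFactorial_add_le K j i
    _ = t j * (θ / c * √((K - j : ℕ) : ℝ)) ^ i := by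
        rw [h.eq, hpow, pow_add, mul_pow, div_pow]
        field_simp

theorem mul_div_le_of_le_mul_pow (h : IsContactIndex t K ℓ θ c j) (hK : K < ℓ) (hθ : 0 < θ)
    (hc : 0 < c) {B Λ : ℝ} (hB : 1 ≤ B) (hΛ : 0 ≤ Λ) (hℓ : t ℓ = (B * √ℓ * θ) ^ ℓ)
    (hle : t ℓ ≤ t j * (Λ * √((ℓ - j : ℕ) : ℝ)) ^ (ℓ - j)) : B * (θ / c) ≤ Λ := by
  have hj := h.le
  have hsqrt : 0 < √(ℓ : ℝ) := Real.sqrt_pos.2 (by exact_mod_cast (by lia : 0 < ℓ))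
  have htj : t j ≤ (√ℓ * θ) ^ j * c ^ (ℓ - j) := by
    rw [h.eq, mul_pow]
    gcongr
    rw [Real.sqrt_le_left (by positivity), pow_right_comm, Real.sq_sqrt (Nat.cast_nonneg _)]
    exact_mod_cast (Nat.descFactorial_le_pow K j).trans (Nat.pow_le_pow_left hK.le j)
  have hchain : (√ℓ * θ) ^ j * (B * √ℓ * θ) ^ (ℓ - j) ≤
      (√ℓ * θ) ^ j * (c * Λ * √ℓ) ^ (ℓ - j) := by
    calc (√ℓ * θ) ^ j * (B * √ℓ * θ) ^ (ℓ - j)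
        ≤ (B * √ℓ * θ) ^ j * (B * √ℓ * θ) ^ (ℓ - j) := by
          gcongr
          nlinarith
      _ = t ℓ := by rw [← pow_add, Nat.add_sub_cancel' (by lia), hℓ]
      _ ≤ (√ℓ * θ) ^ j * c ^ (ℓ - j) * (Λ * √ℓ) ^ (ℓ - j) := by
          grw [hle, htj]
          gcongr
          lia
      _ = (√ℓ * θ) ^ j * (c * Λ * √ℓ) ^ (ℓ - j) := by rw [mul_assoc, ← mul_pow, mul_assoc c]
  have hbase : B * √ℓ * θ ≤ c * Λ * √ℓ := (pow_le_pow_iff_left₀ (by positivity) (by positivity)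
    (by lia)).1 (le_of_mul_le_mul_left hchain (by positivity))
  rw [← mul_div_assoc, div_le_iff₀ hc]
  exact le_of_mul_le_mul_right (by linarith) hsqrt

theorem le_add_one_of_splits {a : ℕ → ℝ} (h : IsContactIndex (fun i ↦ |a i|) K ℓ θ c j)
    (hs : (jensenPoly a ℓ 0).Splits) (hK : K < ℓ) (hθ : 0 < θ) (hc : 1 ≤ c)
    (hℓ : |a ℓ| = (1000 * √ℓ * θ) ^ ℓ) : K ≤ j + 1 := by
  by_contra! hlt
  have hcpos : 0 < c := by linarith
  have hjpos : 0 < |a j| := (sqrt_descFactorial_mul_pow_pos h.le hθ).trans_le (h.le_apply hθ hc)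
  obtain ⟨Λ, hΛ, hle, N, hN, heq⟩ := exists_mul_pow_bound_attained
    (s := Icc (K - j + 1) (ℓ - j)) (f := fun i ↦ |a (j + i)|) (w := fun i ↦ |a j| * √i ^ i)
    (p := id) (nonempty_Icc.2 (by lia)) (fun i _ ↦ abs_nonneg _)
    (fun i hi ↦ by have : 0 < i := (by grind); positivity) (by grind)
  simp only [id_eq, mul_assoc, ← mul_pow, mul_comm √_ Λ, mem_Icc] at hle hN heq
  have hsteep : 1000 * (θ / c) ≤ Λ := by
    refine h.mul_div_le_of_le_mul_pow hK hθ hcpos (by norm_num) hΛ hℓ ?_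
    have := hle (ℓ - j) (by lia)
    rwa [Nat.add_sub_cancel' (by lia)] at this
  have hΛpos : 0 < Λ := lt_of_lt_of_le (by positivity) hsteep
  have hNpos : 0 < N := by lia
  have hsplits : (jensenPoly a N j).Splits := splits_jensenPoly_of_le hs (by lia)
  refine (lt_mul_of_window (f := fun i ↦ |a (j + i)|) (N := N) (m := K - j) hjpos (by lia)
    (by lia) hΛpos (by positivity) (fun r hr ↦ ?_) (fun i hi ↦ h.apply_add_le hK hθ hcpos hi)
    fun i hi ↦ hle i (by grind)).not_ge hsteep
  exact abs_mul_sqrt_pow_le_sum_of_splits hsplits (by positivity) heq hr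

end IsContactIndex

theorem exists_pow_le_abs_of_splits {a : ℕ → ℝ} (h0 : |a 0| = 1) {k ℓ : ℕ}
    (hs : (jensenPoly a ℓ 0).Splits) (hk : k + 1 < ℓ) {θ : ℝ} (hθ : 0 < θ)
    (hℓ : |a ℓ| = (1000 * √ℓ * θ) ^ ℓ) :
    ∃ j, (j = k ∨ j = k + 1) ∧ (√(k + 1 : ℕ) / 2 * θ) ^ j ≤ |a j| := by
  obtain ⟨j, c, hc, hj⟩ := exists_isContactIndex (fun i ↦ abs_nonneg (a i)) h0 hk hθ
  have hle := hj.le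
  have hge := hj.le_add_one_of_splits hs hk hθ hc hℓ
  refine ⟨j, by lia, le_trans ?_ (hj.le_apply hθ hc)⟩
  grw [mul_pow, half_sqrt_pow_le_sqrt_descFactorial hle]

theorem exists_rpow_abs_le_of_splits {a : ℕ → ℝ} (h0 : |a 0| = 1) {k ℓ : ℕ}
    (hs : (jensenPoly a ℓ 0).Splits) (hk : 1 ≤ k) (hkℓ : k < ℓ) :
    ∃ j, (j = k ∨ j = k + 1) ∧ |a ℓ| ^ (1 / ℓ : ℝ) ≤
      2000 * ((ℓ / j : ℝ) ^ (1 / 2 : ℝ) * |a j| ^ (1 / j : ℝ)) := by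
  rcases hkℓ.nat_succ_le.eq_or_lt with rfl | hlt
  · refine ⟨k + 1, Or.inr rfl, ?_⟩
    rw [div_self (by positivity), Real.one_rpow, one_mul]
    linarith [Real.rpow_nonneg (abs_nonneg (a (k + 1))) (1 / (k + 1 : ℕ) : ℝ)]
  have hℓ : (0 : ℝ) < ℓ := by exact_mod_cast (by lia : 0 < ℓ)
  rcases (abs_nonneg (a ℓ)).eq_or_lt with hzero | hpos
  · refine ⟨k, Or.inl rfl, ?_⟩
    rw [← hzero, Real.zero_rpow (by positivity)]
    positivity
  set ρ := |a ℓ| ^ (1 / ℓ : ℝ) with hρ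
  have hρpos : 0 < ρ := by positivity
  obtain ⟨j, hj, hle⟩ := exists_pow_le_abs_of_splits h0 hs hlt (θ := ρ / (1000 * √ℓ))
    (by positivity) (by
      rw [mul_div_cancel₀ _ (by positivity), hρ, one_div, Real.rpow_inv_natCast_pow (abs_nonneg _)
        (by lia)])
  refine ⟨j, hj, ?_⟩
  have hjpos : (0 : ℝ) < j := by exact_mod_cast (by lia : 0 < j)
  have hmono : √(j : ℝ) ≤ √(k + 1 : ℕ) := by
    gcongr
    lia
  have hroot : √j / 2 * (ρ / (1000 * √ℓ)) ≤ |a j| ^ (1 / j : ℝ) := by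
    grw [hmono]
    rw [one_div, Real.le_rpow_inv_iff_of_pos (by positivity) (abs_nonneg _) hjpos]
    exact_mod_cast hle
  rw [← Real.sqrt_eq_rpow, Real.sqrt_div hℓ.le]
  calc ρ = 2000 * (√ℓ / √j * (√j / 2 * (ρ / (1000 * √ℓ)))) := by field_simp; norm_num
    _ ≤ _ := by grw [hroot]

end Extremal

theorem maclaurin_type_inequality_explicit :
    ∀ (n : ℕ), 1 ≤ n → ∀ (y : Fin n → ℝ) (k ℓ : ℕ),
      1 ≤ k → k < ℓ → ℓ ≤ n →
      |smean n ℓ y| ^ ((1 : ℝ) / ℓ) ≤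
        160 * Real.exp 7 *
          max (((ℓ : ℝ) / k) ^ ((1 : ℝ) / 2) * |smean n k y| ^ ((1 : ℝ) / k))
            (((ℓ : ℝ) / (k + 1)) ^ ((1 : ℝ) / 2) * |smean n (k + 1) y| ^ ((1 : ℝ) / (k + 1))) := by
  intro n _ y k ℓ hk hkℓ hℓn
  have hsplits : (jensenPoly (smean n · y) ℓ 0).Splits :=
    splits_jensenPoly_of_le (splits_jensenPoly_smean n y) (by lia)
  obtain ⟨j, hj, hle⟩ := exists_rpow_abs_le_of_splits (by simp [smean_zero]) hsplits hk hkℓ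
  have hconst : (2000 : ℝ) ≤ 160 * exp 7 := by
    linarith [Real.quadratic_le_exp_of_nonneg (by norm_num : (0 : ℝ) ≤ 7)]
  refine hle.trans ?_
  gcongr
  rcases hj with rfl | rfl
  · exact le_max_left _ _
  · exact_mod_cast le_max_right _ _
end

section
/- Let n be an even positive integer and let y = (y_1, …, y_n) consist of exactly n/2 entries equal to +1 and n/2 entries equal to −1. Then for all 0 ≤ k ≤ n: if k is even then s_k(y) = (−1)^(k/2) · binom(n/2, k/2) / binom(n, k), and if k is odd then s_k(y) = 0. -/
open Finset Real

/-! The elementary symmetric functions of `y` are the coefficients of `∏ᵢ (1 + yᵢ X)`. If `m` of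
the `yᵢ` are `1` and `m` are `-1`, this product is `(1 + X) ^ m * (1 - X) ^ m = (1 - X²) ^ m`, whose
coefficients are given by the binomial theorem in the variable `X²`. -/

section GeneratingPolynomial

open Polynomial

variable {ι R : Type*}

theorem coeff_prod_one_add_C_mul_X [CommSemiring R] (s : Finset ι) (y : ι → R) (k : ℕ) :
    (∏ i ∈ s, (1 + C (y i) * X)).coeff k = ∑ A ∈ s.powersetCard k, ∏ i ∈ A, y i := by
  have expansion : ∏ i ∈ s, (1 + C (y i) * X) =
      ∑ A ∈ s.powerset, C (∏ i ∈ A, y i) * X ^ #A := by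
    simp only [prod_one_add, prod_mul_distrib, prod_const, map_prod]
  simp only [expansion, finsetSum_coeff, coeff_C_mul_X_pow, ← sum_filter,
    powersetCard_eq_filter, eq_comm]

theorem coeff_one_sub_X_pow [CommRing R] (m k : ℕ) :
    ((1 - X : R[X]) ^ m).coeff k = (-1) ^ k * m.choose k := by
  have substitution : (1 - X : R[X]) ^ m = ((1 + X) ^ m).comp (C (-1) * X) := by
    simp [sub_eq_add_neg]
  rw [substitution, comp_C_mul_X_coeff, coeff_one_add_X_pow, mul_comm]

theorem coeff_one_sub_X_sq_pow [CommRing R] (m k : ℕ) :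
    ((1 - X ^ 2 : R[X]) ^ m).coeff k =
      if Even k then (-1) ^ (k / 2) * (m.choose (k / 2) : R) else 0 := by
  have substitution : (1 - X ^ 2 : R[X]) ^ m = expand R 2 ((1 - X) ^ m) := by simp
  simp only [substitution, coeff_expand two_pos, coeff_one_sub_X_pow, even_iff_two_dvd]

theorem prod_one_add_C_mul_X_of_signs [CommRing R] [DecidableEq R] {s : Finset ι} {y : ι → R}
    (hy : ∀ i ∈ s, y i = 1 ∨ y i = -1) :
    ∏ i ∈ s, (1 + C (y i) * X) =
      (1 + X) ^ #{i ∈ s | y i = 1} * (1 - X) ^ #{i ∈ s | y i ≠ 1} := by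
  have factor (i : ι) (hi : i ∈ s) :
      1 + C (y i) * X = if y i = 1 then 1 + X else 1 - X := by
    split_ifs with h
    · simp [h]
    · simp [(hy i hi).resolve_left h, sub_eq_add_neg]
  rw [prod_congr rfl factor, prod_ite, prod_const, prod_const]

theorem smean_of_balanced_signs_general [CommRing R] [DecidableEq R] {s : Finset ι} {y : ι → R}
    (hs : Even #s) (hy : ∀ i ∈ s, y i = 1 ∨ y i = -1) (hcard : #{i ∈ s | y i = 1} = #s / 2)
    (k : ℕ) :
    (Even k → ∑ A ∈ s.powersetCard k, ∏ i ∈ A, y i =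
      (-1) ^ (k / 2) * ((#s / 2).choose (k / 2) : R)) ∧
    (Odd k → ∑ A ∈ s.powersetCard k, ∏ i ∈ A, y i = 0) := by
  have hcard_neg : #{i ∈ s | y i ≠ 1} = #s / 2 := by
    have := card_filter_add_card_filter_not (s := s) (y · = 1)
    grind
  have generating : ∏ i ∈ s, (1 + C (y i) * X) = (1 - X ^ 2) ^ (#s / 2) := by
    rw [prod_one_add_C_mul_X_of_signs hy, hcard, hcard_neg, ← mul_pow, ← sq_sub_sq, one_pow]
  rw [← coeff_prod_one_add_C_mul_X, generating, coeff_one_sub_X_sq_pow]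
  exact ⟨fun hk ↦ if_pos hk, fun hk ↦ if_neg (Nat.not_even_iff_odd.mpr hk)⟩

end GeneratingPolynomial

theorem smean_of_balanced_signs (n : ℕ) (hn : 0 < n) (hev : Even n) (y : Fin n → ℝ)
    (hy : ∀ i, y i = 1 ∨ y i = -1)
    (hcard : (Finset.univ.filter fun i => y i = 1).card = n / 2) :
    ∀ k : ℕ, k ≤ n →
      (Even k → smean n k y = (-1) ^ (k / 2) * (Nat.choose (n / 2) (k / 2) : ℝ) / (Nat.choose n k : ℝ)) ∧
      (Odd k → smean n k y = 0) := by
  intro k _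
  have h := smean_of_balanced_signs_general (s := univ) (by rwa [card_fin]) (fun i _ ↦ hy i)
    (by rwa [card_fin]) k
  rw [card_fin] at h
  exact ⟨fun hk ↦ by rw [smean, esymmS, h.1 hk], fun hk ↦ by rw [smean, esymmS, h.2 hk, zero_div]⟩
end

section
/- There exist absolute constants c, C > 0 such that the following holds: for every even positive integer n, if y = (y_1, …, y_n) consists of exactly n/2 entries equal to +1 and n/2 entries equal to −1, then for every even integer k with 2 ≤ k ≤ n one has c · (k/n)^(1/2) ≤ |s_k(y)|^(1/k) ≤ C · (k/n)^(1/2). -/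
open Finset Real

/-!
With `n = 2N` and `k = 2j`, the generating polynomial `∏ i, (X + y i)` is `(X² - 1) ^ N`, so
`|s_k(y)| = binom(N, j) / binom(2N, 2j)`. Since `binom(m, l)` lies between `(m / l) ^ l` and
`(e m / l) ^ l`, the numerator is `(N / j) ^ j` and the denominator `(N / j) ^ (2 * j)`, each up to
a factor exponential in `j`. Hence `|s_k(y)|` is `(j / N) ^ j` up to such a factor, which the
`2j`-th root turns into a constant.
-/

theorem div_pow_le_choose {K : Type*} [Field K] [LinearOrder K] [IsStrictOrderedRing K]
    {n k : ℕ} (hkn : k ≤ n) : ((n : K) / k) ^ k ≤ n.choose k := by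
  induction k generalizing n with
  | zero => simp
  | succ k ih =>
    obtain ⟨m, rfl⟩ : ∃ m, n = m + 1 := ⟨n - 1, by omega⟩
    have hkm : k ≤ m := by omega
    have choose_succ :
        ((m + 1).choose (k + 1) : K) = ((m + 1 : ℕ) : K) / (k + 1 : ℕ) * m.choose k := by
      rw [div_mul_eq_mul_div, eq_div_iff (Nat.cast_ne_zero.mpr k.succ_ne_zero)]
      exact_mod_cast (Nat.add_one_mul_choose_eq m k).symm
    have ratio_le : (((m + 1 : ℕ) : K) / (k + 1 : ℕ)) ^ k ≤ ((m : K) / k) ^ k := by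
      obtain rfl | hk := k.eq_zero_or_pos
      · simp
      · have hk' : (0 : K) < k := Nat.cast_pos.mpr hk
        have hkm' : (k : K) ≤ m := Nat.cast_le.mpr hkm
        gcongr ?_ ^ k
        rw [div_le_div_iff₀ (by positivity) hk']
        push_cast
        linarith
    rw [choose_succ, pow_succ']
    gcongr
    exact ratio_le.trans (ih hkm)

theorem choose_le_exp_one_mul_div_pow (n k : ℕ) :
    (n.choose k : ℝ) ≤ (exp 1 * (n / k)) ^ k := by
  obtain rfl | hk := k.eq_zero_or_pos
  · simp
  calc (n.choose k : ℝ)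
      ≤ n ^ k / k.factorial := Nat.choose_le_pow_div k n
    _ = k ^ k / k.factorial * (n / k) ^ k := by
      rw [div_pow]
      field_simp
    _ ≤ exp k * (n / k) ^ k := by
      gcongr
      exact pow_div_factorial_le_exp _ k.cast_nonneg k
    _ = (exp 1 * (n / k)) ^ k := by rw [mul_pow, ← exp_nat_mul, mul_one]

theorem cast_mul_div_cast_mul_left {K : Type*} [Field K] [CharZero K] {c : ℕ} (hc : c ≠ 0)
    (a b : ℕ) : ((c * a : ℕ) : K) / (c * b : ℕ) = a / b := by
  push_cast
  exact mul_div_mul_left _ _ (Nat.cast_ne_zero.mpr hc)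

theorem exp_neg_two_mul_div_pow_le_choose_div_choose {N j : ℕ} (hjN : j ≤ N) :
    (exp (-2) * (j / N)) ^ j ≤ (N.choose j : ℝ) / (2 * N).choose (2 * j) := by
  have hpos : 0 < (2 * N).choose (2 * j) := Nat.choose_pos (by omega)
  have upper := choose_le_exp_one_mul_div_pow (2 * N) (2 * j)
  rw [cast_mul_div_cast_mul_left two_ne_zero] at upper
  have base_eq : exp (-2) * (j / N) = (N / j) / (exp 1 * (N / j)) ^ 2 := by
    have exp_one_sq : exp 1 ^ 2 = exp 2 := by rw [← exp_nat_mul, Nat.cast_two, mul_one]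
    rw [mul_pow, exp_one_sq, sq, mul_comm (exp 2), ← div_div, div_self_mul_self', inv_div,
      div_eq_inv_mul (_ / _) (exp 2), exp_neg]
  calc (exp (-2) * (j / N)) ^ j
      = ((N : ℝ) / j) ^ j / (exp 1 * (N / j)) ^ (2 * j) := by rw [base_eq, div_pow, pow_mul]
    _ ≤ (N.choose j : ℝ) / (2 * N).choose (2 * j) := by
        gcongr
        exact div_pow_le_choose hjN

theorem choose_div_choose_le_exp_one_mul_div_pow {N j : ℕ} (hjN : j ≤ N) :
    (N.choose j : ℝ) / (2 * N).choose (2 * j) ≤ (exp 1 * (j / N)) ^ j := by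
  obtain rfl | hj := j.eq_zero_or_pos
  · simp
  have hN : 0 < N := by omega
  have lower := div_pow_le_choose (K := ℝ) (Nat.mul_le_mul_left 2 hjN)
  rw [cast_mul_div_cast_mul_left two_ne_zero] at lower
  calc (N.choose j : ℝ) / (2 * N).choose (2 * j)
      ≤ (exp 1 * (N / j)) ^ j / (N / j) ^ (2 * j) := by
        gcongr
        exact choose_le_exp_one_mul_div_pow N j
    _ = (exp 1 * (j / N)) ^ j := by
        rw [pow_mul, ← div_pow, sq, mul_div_assoc, div_self_mul_self', inv_div]

section

open Polynomial

variable {ι R : Type*} [CommRing R] [DecidableEq R] {s : Finset ι} {y : ι → R}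

theorem prod_X_add_C_of_signs (hy : ∀ i ∈ s, y i = 1 ∨ y i = -1) :
    ∏ i ∈ s, (X + C (y i)) = (X + 1) ^ #{i ∈ s | y i = 1} * (X - 1) ^ #{i ∈ s | y i ≠ 1} := by
  rw [← prod_filter_mul_prod_filter_not s (y · = 1)]
  congr 1 <;> refine prod_eq_pow_card fun i hi => ?_
  · simp [(mem_filter.mp hi).2]
  · obtain ⟨his, hi1⟩ := mem_filter.mp hi
    simp [(hy i his).resolve_left hi1, sub_eq_add_neg]

theorem sum_powersetCard_prod_of_balanced_signs {N : ℕ}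
    (hy : ∀ i ∈ s, y i = 1 ∨ y i = -1) (hs : #s = 2 * N) (hpos : #{i ∈ s | y i = 1} = N) (j : ℕ) :
    ∑ A ∈ s.powersetCard (2 * j), ∏ i ∈ A, y i = (-1) ^ j * N.choose j := by
  obtain hNj | hjN := lt_or_ge N j
  · rw [powersetCard_eq_empty.mpr (by omega), Nat.choose_eq_zero_of_lt hNj]
    simp
  have hneg : #{i ∈ s | y i ≠ 1} = N := by
    have hcard : #{i ∈ s | y i = 1} + #{i ∈ s | y i ≠ 1} = #s :=
      card_filter_add_card_filter_not (y · = 1)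
    omega
  have hprod : ∏ i ∈ s, (X + C (y i)) = expand R 2 ((X + C (-1)) ^ N) := by
    rw [prod_X_add_C_of_signs hy, hpos, hneg, ← mul_pow, map_pow]
    congr 1
    simp only [map_add, map_neg, map_one, expand_X]
    ring
  have hcoeff := prod_X_add_C_coeff s y (k := 2 * (N - j)) (by omega)
  rw [hprod, coeff_expand_mul' two_pos, coeff_X_add_C_pow, Nat.choose_symm hjN,
    show N - (N - j) = j by omega, show #s - 2 * (N - j) = 2 * j by omega] at hcoeff
  exact hcoeff.symm

end

theorem abs_smean_of_balanced_signs {N : ℕ} {y : Fin (2 * N) → ℝ} (hy : ∀ i, y i = 1 ∨ y i = -1)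
    (hpos : #{i | y i = 1} = N) (j : ℕ) :
    |smean (2 * N) (2 * j) y| = (N.choose j : ℝ) / (2 * N).choose (2 * j) := by
  rw [smean, esymmS,
    sum_powersetCard_prod_of_balanced_signs (fun i _ => hy i) (card_fin _) hpos]
  simp [abs_div, abs_mul]

theorem pow_rpow_one_div_mul {x : ℝ} (hx : 0 ≤ x) (d : ℕ) {j : ℕ} (hj : j ≠ 0) :
    (x ^ j) ^ ((1 : ℝ) / (d * j : ℕ)) = x ^ ((1 : ℝ) / d) := by
  rw [← rpow_natCast_mul hx]
  congr 1
  push_cast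
  field_simp

theorem smean_of_balanced_signs_asymp :
    ∃ c C : ℝ, 0 < c ∧ 0 < C ∧
      ∀ (n : ℕ), 0 < n → Even n → ∀ (y : Fin n → ℝ),
        (∀ i, y i = 1 ∨ y i = -1) →
        (Finset.univ.filter fun i => y i = 1).card = n / 2 →
        ∀ k : ℕ, Even k → 2 ≤ k → k ≤ n →
          c * ((k : ℝ) / n) ^ ((1 : ℝ) / 2) ≤ |smean n k y| ^ ((1 : ℝ) / k) ∧
          |smean n k y| ^ ((1 : ℝ) / k) ≤ C * ((k : ℝ) / n) ^ ((1 : ℝ) / 2) := by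
  refine ⟨exp (-2) ^ ((1 : ℝ) / 2), exp 1 ^ ((1 : ℝ) / 2), by positivity, by positivity, ?_⟩
  intro n _ hn y hy hpos k hk hk2 hkn
  obtain ⟨N, rfl⟩ := hn.two_dvd
  obtain ⟨j, rfl⟩ := hk.two_dvd
  have hj : j ≠ 0 := by omega
  have hjN : j ≤ N := by omega
  rw [Nat.mul_div_cancel_left N two_pos] at hpos
  have root {a : ℝ} (ha : 0 ≤ a) :
      ((a * (j / N)) ^ j) ^ ((1 : ℝ) / (2 * j : ℕ)) =
        a ^ ((1 : ℝ) / 2) * ((j : ℝ) / N) ^ ((1 : ℝ) / 2) := by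
    rw [pow_rpow_one_div_mul (by positivity) 2 hj, Nat.cast_two, mul_rpow ha (by positivity)]
  rw [abs_smean_of_balanced_signs hy hpos, cast_mul_div_cast_mul_left two_ne_zero,
    ← root (exp_nonneg _), ← root (exp_nonneg _)]
  constructor <;> gcongr
  · exact exp_neg_two_mul_div_pow_le_choose_div_choose hjN
  · exact choose_div_choose_le_exp_one_mul_div_pow hjN
end

section
/- For every n ≥ 2 and all real numbers y_1, …, y_n, one has |s_n(y)|^(2/n) ≤ n · s_1(y)^2 − (n−1) · s_2(y). -/
open Finset Real

/-!
By Newton's identity `p₂ = e₁ ^ 2 - 2 * e₂`, the right-hand side is the arithmetic mean of the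
squares `y i ^ 2`. The left-hand side is their geometric mean, so the bound is AM-GM.
-/

theorem psum_two_eq_esymm_one_sq_sub (σ R : Type*) [Fintype σ] [CommRing R] :
    MvPolynomial.psum σ R 2 = MvPolynomial.esymm σ R 1 ^ 2 - 2 * MvPolynomial.esymm σ R 2 := by
  have index_eq : {a ∈ antidiagonal 2 | a.1 ∈ Set.Ioo 0 2} = {(1, 1)} := by decide
  rw [MvPolynomial.psum_eq_mul_esymm_sub_sum σ R 2 two_pos, index_eq, sum_singleton,
    MvPolynomial.psum_one, MvPolynomial.esymm_one]
  push_cast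
  ring

theorem sum_sq_eq_sq_sum_sub_sum_powersetCard_two {ι R : Type*} [Fintype ι] [CommRing R]
    (f : ι → R) :
    ∑ i, f i ^ 2 = (∑ i, f i) ^ 2 - 2 * ∑ A ∈ powersetCard 2 univ, ∏ i ∈ A, f i := by
  simpa [MvPolynomial.psum, MvPolynomial.esymm, powersetCard_one] using
    congrArg (MvPolynomial.eval f) (psum_two_eq_esymm_one_sq_sub ι R)

theorem abs_prod_rpow_div_card_le_sum_abs_rpow_div_card {ι : Type*} {s : Finset ι}
    (hs : s.Nonempty) (f : ι → ℝ) (p : ℝ) :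
    |∏ i ∈ s, f i| ^ (p / #s) ≤ (∑ i ∈ s, |f i| ^ p) / #s := by
  have am_gm := geom_mean_le_arith_mean s (fun _ => 1) (fun i => |f i| ^ p)
    (fun _ _ => zero_le_one) (by simpa using hs.card_pos) (fun _ _ => by positivity)
  calc |∏ i ∈ s, f i| ^ (p / #s)
      = (∏ i ∈ s, |f i| ^ p) ^ (#s : ℝ)⁻¹ := by
        rw [finsetProd_rpow s _ fun _ _ => abs_nonneg _, ← abs_prod,
          ← rpow_mul (abs_nonneg _), div_eq_mul_inv]
    _ ≤ (∑ i ∈ s, |f i| ^ p) / #s := by simpa using am_gm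

theorem smean_one (n : ℕ) (y : Fin n → ℝ) : smean n 1 y = (∑ i, y i) / n := by
  simp [smean, esymmS, powersetCard_one]

theorem smean_self (n : ℕ) (y : Fin n → ℝ) : smean n n y = ∏ i, y i := by
  have powersetCard_eq : powersetCard n (univ : Finset (Fin n)) = {univ} := by
    simpa using powersetCard_self (univ : Finset (Fin n))
  simp [smean, esymmS, powersetCard_eq]

theorem mul_smean_one_sq_sub_mul_smean_two {n : ℕ} (hn : 2 ≤ n) (y : Fin n → ℝ) :
    n * smean n 1 y ^ 2 - ((n : ℝ) - 1) * smean n 2 y = (∑ i, y i ^ 2) / n := by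
  have two_le_cast : (2 : ℝ) ≤ n := mod_cast hn
  have cast_ne_zero : (n : ℝ) ≠ 0 := by linarith
  have cast_sub_one_ne_zero : (n : ℝ) - 1 ≠ 0 := by linarith
  rw [smean_one, smean, esymmS, Nat.cast_choose_two, sum_sq_eq_sq_sum_sub_sum_powersetCard_two]
  field_simp

theorem sn_bound_s1_s2 (n : ℕ) (hn : 2 ≤ n) (y : Fin n → ℝ) :
    |smean n n y| ^ ((2 : ℝ) / n) ≤ n * smean n 1 y ^ 2 - ((n : ℝ) - 1) * smean n 2 y := by
  have : NeZero n := ⟨by lia⟩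
  rw [smean_self, mul_smean_one_sq_sub_mul_smean_two hn]
  simpa using abs_prod_rpow_div_card_le_sum_abs_rpow_div_card univ_nonempty y 2
end
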